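/- arXiv:0812.2093 — 4 statements merged into one kernel-verified Lean document; each statement's English description precedes it below -/
import Mathlib

section
/- There exists a finitely generated torsion group that is not unitarizable, i.e., it admits a uniformly bounded representation on some complex Hilbert space that is not unitarizable. -/
/-- A representation of a group `G` on a complex inner product space `E`
(a homomorphism into the group of invertible continuous linear operators on `E`)
is *uniformly bounded* if the operator norms `‖π g‖` are bounded. -/
def UniformlyBoundedRep {G : Type*} [Group G] {E : Type*} [NormedAddCommGroup E]
    [InnerProductSpace ℂ E] (π : G →* (E ≃L[ℂ] E)) : Prop :=
  ∃ C : ℝ, ∀ g : G, ‖((π g : E ≃L[ℂ] E) : E →L[ℂ] E)‖ ≤ C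

/-- A representation `π` is *unitarizable* if there is a continuous linear automorphism
`S` of `E` such that `g ↦ S⁻¹ π(g) S` is a unitary operator for every `g` (being an
invertible continuous linear map, it is unitary iff it is an isometry). -/
def IsUnitarizableRep {G : Type*} [Group G] {E : Type*} [NormedAddCommGroup E]
    [InnerProductSpace ℂ E] (π : G →* (E ≃L[ℂ] E)) : Prop :=
  ∃ S : E ≃L[ℂ] E, ∀ g : G, ∀ v : E, ‖S.symm (π g (S v))‖ = ‖v‖

/-- A group `G` is *unitarizable* if every uniformly bounded representation of `G`
on every complex Hilbert space is unitarizable. -/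
def Unitarizable (G : Type*) [Group G] : Prop :=
  ∀ (E : Type) [NormedAddCommGroup E] [InnerProductSpace ℂ E] [CompleteSpace E]
    (π : G →* (E ≃L[ℂ] E)), UniformlyBoundedRep π → IsUnitarizableRep π

/-!
If a group `G` is unitarizable, then every bounded derivation of its left regular representation on
`ℓ²(G)` is inner. Consider a *Littlewood function*: `f ≥ 0` with `f (s⁻¹ * t) = a s t + b s t`,
where `a, b ≥ 0` and the rows of `a` and the columns of `b` are bounded in `ℓ¹`. The commutators of
the (possibly unbounded) matrix `a` with translations are then bounded derivations, so `a` differs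
from a bounded operator by a translation-invariant matrix, and this forces `f ∈ ℓ²(G)`. By a gliding
hump, a group with Littlewood functions of bounded constant and arbitrarily large `ℓ²`-norm is not
unitarizable.

Such functions exist on an infinite, finitely generated, residually finite group `G` whose normal
subgroups `H` of finite index satisfy `b₁(H; k) ≥ c [G : H]` for a fixed `c > 0`. The dual of
`Hom(H, k)` is spanned by the differences, along edges of the Schreier graph of `H`, of a potential
on its vertices, and a set of edges on which these differences are linearly independent contains at
most `|Y|` edges inside any set `Y` of vertices. By Hall's theorem it can be oriented with
out-degrees at most one, so its adjacency matrix splits as `a + b` with bound `1`. Averaging over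
`G / H` and letting `H` shrink gives a Littlewood function. Inside a normal subgroup `K` of finite
index the growth rate is even `b₁(H; k) ≥ c [G : K] [K : H]`, so the construction for `K`, extended
by zero, yields a Littlewood function on `G` with constant `1` and sum at least `c [G : K]` over a
generating set of `K` with `O([G : K])` elements. By Cauchy–Schwarz `‖f‖₂²` is at least a constant
times `[G : K]`.

It remains to find a torsion group of this kind. Enumerate the free group `F` of rank two as `w i`,
and kill `w i ^ p ^ (i + 2)` for all `i` in the largest residually finite way. In a normal subgroup
`H` of finite index in `F`, the conjugates of `w i ^ p ^ (i + 2)` impose at most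
`[F : H] / p ^ (i + 2)` linear conditions on `Hom(H, 𝔽_p)`, whose dimension is at least `[F : H]`,
so at least `[F : H] / 2` of it survives.
-/

open Filter Topology
open scoped NNReal lp

section Matrices

variable {ι κ ι' κ' α : Type*} {C D : ℝ≥0}

/-- The rows of the nonnegative matrix `a` have `ℓ¹`-norm at most `C`. -/
def RowBounded (a : ι → κ → ℝ≥0) (C : ℝ≥0) : Prop :=
  ∀ s (X : Finset κ), ∑ t ∈ X, a s t ≤ C

namespace RowBounded

variable {a b : ι → κ → ℝ≥0}

theorem apply_le (ha : RowBounded a C) (s : ι) (t : κ) : a s t ≤ C := by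
  simpa using ha s {t}

theorem add (ha : RowBounded a C) (hb : RowBounded b D) :
    RowBounded (fun s t => a s t + b s t) (C + D) := fun s X => by
  simpa only [Finset.sum_add_distrib] using add_le_add (ha s X) (hb s X)

theorem const_mul (c : ℝ≥0) (ha : RowBounded a C) :
    RowBounded (fun s t => c * a s t) (c * C) := fun s X => by
  simpa only [← Finset.mul_sum] using mul_le_mul_right (ha s X) c

theorem of_rows_le {a' : ι' → κ' → ℝ≥0} (ha : RowBounded a C) (p : ι' → ι) (q : ι' → κ' → κ)
    (hq : ∀ s, Set.InjOn (q s) {t | a' s t ≠ 0})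
    (hle : ∀ s t, a' s t ≠ 0 → a' s t ≤ a (p s) (q s t)) : RowBounded a' C := fun s X => by
  classical
  have hmem : ∀ t ∈ X.filter (a' s · ≠ 0), a' s t ≠ 0 := fun t ht => (Finset.mem_filter.1 ht).2
  calc ∑ t ∈ X, a' s t = ∑ t ∈ X with a' s t ≠ 0, a' s t := (Finset.sum_filter_ne_zero X).symm
    _ ≤ ∑ t ∈ X with a' s t ≠ 0, a (p s) (q s t) :=
      Finset.sum_le_sum fun t ht => hle s t (hmem t ht)
    _ = ∑ t ∈ (X.filter (a' s · ≠ 0)).image (q s), a (p s) t :=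
      (Finset.sum_image ((hq s).mono hmem)).symm
    _ ≤ C := ha _ _

theorem mono (hb : RowBounded b C) (hab : ∀ s t, a s t ≤ b s t) : RowBounded a C :=
  hb.of_rows_le id (fun _ => id) (fun _ => Set.injOn_id _) fun s t _ => hab s t

theorem comp (ha : RowBounded a C) (p : ι' → ι) {q : κ' → κ} (hq : Function.Injective q) :
    RowBounded (fun s t => a (p s) (q t)) C :=
  ha.of_rows_le p (fun _ => q) (fun _ => hq.injOn) fun _ _ _ => le_rfl

theorem tsum {a : α → ι → κ → ℝ≥0} {C : α → ℝ≥0} (hC : Summable C)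
    (ha : ∀ i, RowBounded (a i) (C i)) : RowBounded (fun s t => ∑' i, a i s t) (∑' i, C i) := by
  intro s X
  have hsum : ∀ t ∈ X, Summable fun i => a i s t := fun t _ =>
    NNReal.summable_of_le (fun i => (ha i).apply_le s t) hC
  rw [← Summable.tsum_finsetSum hsum]
  exact (summable_sum hsum).tsum_le_tsum (fun i => ha i s X) hC

theorem of_tendsto {l : Filter α} [l.NeBot] {u : α → ι → κ → ℝ≥0}
    (hu : ∀ i, RowBounded (u i) C) (h : ∀ s t, Tendsto (fun i => u i s t) l (𝓝 (a s t))) :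
    RowBounded a C := fun s X =>
  le_of_tendsto' (tendsto_finsetSum X fun t _ => h s t) fun i => hu i s X

theorem exists_tendsto (U : Ultrafilter α) {u : α → ι → κ → ℝ≥0}
    (hu : ∀ i, RowBounded (u i) C) :
    ∃ v, RowBounded v C ∧ ∀ s t, Tendsto (fun i => u i s t) U (𝓝 (v s t)) := by
  have hlim : ∀ s t, ∃ x, Tendsto (fun i => u i s t) U (𝓝 x) := fun s t => by
    have hmem : ∀ i, u i s t ∈ Set.Icc 0 C := fun i => ⟨zero_le, (hu i).apply_le s t⟩
    obtain ⟨x, -, hx⟩ := isCompact_Icc.ultrafilter_le_nhds (U.map fun i => u i s t)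
      (tendsto_principal.2 (Eventually.of_forall hmem))
    exact ⟨x, hx⟩
  choose v hv using hlim
  exact ⟨v, of_tendsto hu hv, hv⟩

end RowBounded

/-- The nonnegative matrix `u` is *Littlewood bounded* by `C` if it is the sum of a nonnegative
matrix whose rows, and one whose columns, have `ℓ¹`-norm at most `C`. -/
def LittlewoodBounded (u : ι → κ → ℝ≥0) (C : ℝ≥0) : Prop :=
  ∃ a b, RowBounded a C ∧ RowBounded (fun t s => b s t) C ∧ u = a + b

namespace LittlewoodBounded

theorem apply_le {u : ι → κ → ℝ≥0} (hu : LittlewoodBounded u C) (s : ι) (t : κ) :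
    u s t ≤ C + C := by
  obtain ⟨a, b, ha, hb, rfl⟩ := hu
  exact add_le_add (ha.apply_le s t) (hb.apply_le t s)

theorem const_mul (c : ℝ≥0) {u : ι → κ → ℝ≥0} (hu : LittlewoodBounded u C) :
    LittlewoodBounded (fun s t => c * u s t) (c * C) := by
  obtain ⟨a, b, ha, hb, rfl⟩ := hu
  exact ⟨_, _, ha.const_mul c, hb.const_mul c, by ext; simp [mul_add]⟩

theorem tsum {u : α → ι → κ → ℝ≥0} {C : α → ℝ≥0} (hC : Summable C)
    (hu : ∀ i, LittlewoodBounded (u i) (C i)) :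
    LittlewoodBounded (fun s t => ∑' i, u i s t) (∑' i, C i) := by
  choose a b ha hb hab using hu
  refine ⟨_, _, .tsum hC ha, .tsum hC hb, funext₂ fun s t => ?_⟩
  simp only [hab, Pi.add_apply]
  exact (NNReal.summable_of_le (fun i => (ha i).apply_le s t) hC).tsum_add
    (NNReal.summable_of_le (fun i => (hb i).apply_le t s) hC)

theorem exists_tendsto (U : Ultrafilter α) {u : α → ι → κ → ℝ≥0}
    (hu : ∀ i, LittlewoodBounded (u i) C) :
    ∃ v, LittlewoodBounded v C ∧ ∀ s t, Tendsto (fun i => u i s t) U (𝓝 (v s t)) := by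
  choose a b ha hb hab using hu
  obtain ⟨a', ha', haa'⟩ := RowBounded.exists_tendsto U ha
  obtain ⟨b', hb', hbb'⟩ := RowBounded.exists_tendsto U hb
  refine ⟨_, ⟨a', fun s t => b' t s, ha', hb', rfl⟩, fun s t => ?_⟩
  simpa only [hab, Pi.add_apply] using (haa' s t).add (hbb' t s)

theorem blockDiagonal {u : ι → ι → ℝ≥0} (hu : LittlewoodBounded u C) {p : ι' → α × ι}
    (hp : Function.Injective p) [DecidableEq α] :
    LittlewoodBounded
      (fun s t => if (p s).1 = (p t).1 then u (p s).2 (p t).2 else 0) C := by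
  obtain ⟨a, b, ha, hb, rfl⟩ := hu
  have key : ∀ {c : ι → ι → ℝ≥0}, RowBounded c C →
      RowBounded (fun s t => if (p s).1 = (p t).1 then c (p s).2 (p t).2 else 0) C :=
    fun hc => hc.of_rows_le (fun s => (p s).2) (fun _ t => (p t).2)
      (fun s t ht t' ht' h => hp <| Prod.ext
        ((of_not_not fun hne => ht (if_neg hne)).symm.trans
          (of_not_not fun hne => ht' (if_neg hne))) h)
      fun s t _ => by split_ifs <;> simp
  refine ⟨_, fun s t => if (p s).1 = (p t).1 then b (p s).2 (p t).2 else 0, key ha, ?_, ?_⟩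
  · simpa only [eq_comm] using key hb
  · ext s t
    simp only [Pi.add_apply]
    split_ifs <;> simp

end LittlewoodBounded

theorem rowBounded_one_of_subsingleton {R : ι → κ → Prop} [∀ s t, Decidable (R s t)]
    (hR : ∀ s t t', R s t → R s t' → t = t') :
    RowBounded (fun s t => if R s t then 1 else 0) 1 := fun s X => by
  rw [Finset.sum_boole, Nat.cast_le_one, Finset.card_le_one]
  simp only [Finset.mem_filter]
  exact fun t ht t' ht' => hR s t t' ht.2 ht'.2

/-- By Hall's theorem the edges can be oriented so that every vertex is the tail of at most one. -/
theorem littlewoodBounded_of_card_edges_le [DecidableEq ι] {A : Finset (ι × ι)}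
    (hA : ∀ Y : Finset ι, {e ∈ A | e.1 ∈ Y ∧ e.2 ∈ Y}.card ≤ Y.card) :
    LittlewoodBounded (fun s t => if (s, t) ∈ A then 1 else 0) 1 := by
  obtain ⟨r, hr, hrm⟩ := (Finset.all_card_le_biUnion_card_iff_exists_injective
    (fun e : A => ({e.1.1, e.1.2} : Finset ι))).1 fun B => by
      refine le_trans ?_ (hA _)
      rw [← Finset.card_map (Function.Embedding.subtype _)]
      refine Finset.card_le_card fun e he => ?_
      obtain ⟨⟨e, heA⟩, heB, rfl⟩ := Finset.mem_map.1 he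
      rw [Finset.mem_filter]
      refine ⟨heA, ?_, ?_⟩ <;> exact Finset.mem_biUnion.2 ⟨_, heB, by simp⟩
  classical
  refine ⟨fun s t => if ∃ h : (s, t) ∈ A, r ⟨(s, t), h⟩ = s then 1 else 0,
    fun s t => if ∃ h : (s, t) ∈ A, r ⟨(s, t), h⟩ ≠ s then 1 else 0,
    rowBounded_one_of_subsingleton ?_, rowBounded_one_of_subsingleton ?_, funext₂ fun s t => ?_⟩
  · rintro s t t' ⟨h, hs⟩ ⟨h', hs'⟩
    simpa using hr (hs.trans hs'.symm)
  · have head : ∀ {s t} (h : (s, t) ∈ A), r ⟨(s, t), h⟩ ≠ s → r ⟨(s, t), h⟩ = t :=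
      fun h hs => by simpa [hs] using hrm ⟨_, h⟩
    rintro t s s' ⟨h, hs⟩ ⟨h', hs'⟩
    simpa using hr ((head h hs).trans (head h' hs').symm)
  · by_cases h : (s, t) ∈ A
    · by_cases hs : r ⟨(s, t), h⟩ = s <;> simp [h, hs]
    · simp [h]

theorem littlewoodBounded_of_linearIndepOn [DecidableEq ι] {k M : Type*} [Field k]
    [AddCommGroup M] [Module k M] {A : Finset (ι × ι)} (d : ι → M)
    (hA : LinearIndepOn k (fun e : ι × ι => d e.2 - d e.1) A) :
    LittlewoodBounded (fun s t => if (s, t) ∈ A then 1 else 0) 1 := by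
  classical
  refine littlewoodBounded_of_card_edges_le fun Y => ?_
  set B := {e ∈ A | e.1 ∈ Y ∧ e.2 ∈ Y}
  have hmem : ∀ y ∈ Y, d y ∈ Submodule.span k (Y.image d : Set M) := fun y hy =>
    Submodule.subset_span (by simpa using ⟨y, hy, rfl⟩)
  have hspan : Set.range (fun e : B => d e.1.2 - d e.1.1) ⊆
      Submodule.span k (Y.image d : Set M) := by
    rintro _ ⟨⟨e, he⟩, rfl⟩
    obtain ⟨-, h1, h2⟩ := Finset.mem_filter.1 he
    exact sub_mem (hmem _ h2) (hmem _ h1)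
  have hBY : Fintype.card B ≤ Fintype.card (Y.image d) :=
    linearIndependent_le_span_aux' _ (hA.mono (Finset.filter_subset _ A)) _ hspan
  simp only [Fintype.card_coe] at hBY
  exact hBY.trans Finset.card_image_le

end Matrices

section Unitarizable

open ContinuousLinearMap

theorem starProjection_apply_comm {𝕜 E : Type*} [RCLike 𝕜] [NormedAddCommGroup E]
    [InnerProductSpace 𝕜 E] {M : Submodule 𝕜 E} [M.HasOrthogonalProjection] (U : E ≃ₗᵢ[𝕜] E)
    (hU : ∀ u, U u ∈ M ↔ u ∈ M) (u : E) : M.starProjection (U u) = U (M.starProjection u) := by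
  refine Submodule.eq_starProjection_of_mem_orthogonal
    ((hU _).2 (M.starProjection_apply_mem u)) ?_
  rw [← map_sub, Submodule.mem_orthogonal]
  intro m hm
  have hm' : U.symm m ∈ M := (hU _).1 (by simpa)
  rw [← U.apply_symm_apply m, U.inner_map_map]
  exact (Submodule.mem_orthogonal _ _).1 (M.sub_starProjection_mem_orthogonal u) _ hm'

theorem IsUnitarizableRep.exists_projection {G E : Type*} [Group G] [NormedAddCommGroup E]
    [InnerProductSpace ℂ E] [CompleteSpace E] {π : G →* (E ≃L[ℂ] E)} (hπ : IsUnitarizableRep π)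
    {M : Submodule ℂ E} (hM : IsClosed (M : Set E)) (hπM : ∀ g, ∀ u ∈ M, π g u ∈ M) :
    ∃ P : E →L[ℂ] E, (∀ u, P u ∈ M) ∧ (∀ u ∈ M, P u = u) ∧ ∀ g u, P (π g u) = π g (P u) := by
  obtain ⟨S, hS⟩ := hπ
  let M' : Submodule ℂ E := M.comap (S : E →L[ℂ] E).toLinearMap
  have : CompleteSpace M' := (hM.preimage S.continuous).completeSpace_coe
  let U : G → (E ≃ₗᵢ[ℂ] E) := fun g =>
    ⟨(S.trans ((π g).trans S.symm)).toLinearEquiv, hS g⟩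
  have hSU : ∀ g u, S (U g u) = π g (S u) := fun g u => S.apply_symm_apply _
  have hπinv : ∀ g u, π g⁻¹ (π g u) = u := fun g u => by
    rw [map_inv]
    exact (π g).symm_apply_apply u
  have hUM : ∀ g u, U g u ∈ M' ↔ u ∈ M' := fun g u => by
    change S (U g u) ∈ M ↔ S u ∈ M
    rw [hSU]
    exact ⟨fun h => hπinv g (S u) ▸ hπM g⁻¹ _ h, hπM g _⟩
  refine ⟨S ∘L M'.starProjection ∘L S.symm, fun u => M'.starProjection_apply_mem _, fun u hu => ?_,
    fun g u => ?_⟩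
  · have hu' : S.symm u ∈ M' := by simpa [M'] using hu
    simp [Submodule.starProjection_eq_self_iff.2 hu']
  · have hUS : S.symm (π g u) = U g (S.symm u) := S.injective (by simp [hSU])
    simp [hUS, starProjection_apply_comm (U g) (hUM g), hSU]

variable {G : Type*} [Group G]

section Triangular

variable {V : Type*} [NormedAddCommGroup V] [InnerProductSpace ℂ V]

/-- The representation of `G` on `V ⊕ V` by the operator matrices `!![L g, δ g; 0, L g]`, where `δ`
is a derivation of the representation `L`. -/
def triangularRep (L : G →* (V →L[ℂ] V)) (δ : G → (V →L[ℂ] V))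
    (hδ : ∀ g h, δ (g * h) = L g * δ h + δ g * L h) :
    G →* (WithLp 2 (V × V) ≃L[ℂ] WithLp 2 (V × V)) :=
  let e := WithLp.prodContinuousLinearEquiv 2 ℂ V V
  let ρ : G →* (WithLp 2 (V × V) →L[ℂ] WithLp 2 (V × V)) :=
    { toFun := fun g => e.symm ∘L
        ((L g ∘L .fst ℂ V V + δ g ∘L .snd ℂ V V).prod (L g ∘L .snd ℂ V V)) ∘L e
      map_one' := by
        have hδ1 : δ 1 = 0 := by simpa using hδ 1 1
        ext u : 1
        simp [hδ1]
      map_mul' := fun g h => by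
        ext u : 1
        apply e.injective
        ext <;> simp [hδ, add_assoc] }
  (ContinuousLinearEquiv.unitsEquiv ℂ _).toMonoidHom.comp ρ.toHomUnits

variable {L : G →* (V →L[ℂ] V)} {δ : G → (V →L[ℂ] V)}
  {hδ : ∀ g h, δ (g * h) = L g * δ h + δ g * L h}

theorem triangularRep_apply (g : G) (u : WithLp 2 (V × V)) :
    triangularRep L δ hδ g u = .toLp 2 (L g u.fst + δ g u.snd, L g u.snd) := rfl

theorem uniformlyBoundedRep_triangularRep {C D : ℝ} (hL : ∀ g, ‖L g‖ ≤ C) (hδD : ∀ g, ‖δ g‖ ≤ D) :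
    UniformlyBoundedRep (triangularRep L δ hδ) := by
  refine ⟨C + D + C, fun g => opNorm_le_bound _ ?_ fun u => ?_⟩
  · have := (norm_nonneg _).trans (hL g)
    have := (norm_nonneg _).trans (hδD g)
    positivity
  have hfst : ‖L g u.fst‖ ≤ C * ‖u‖ :=
    (L g).le_of_opNorm_le_of_le (hL g) (WithLp.norm_fst_le _ u)
  have hsnd : ‖L g u.snd‖ ≤ C * ‖u‖ :=
    (L g).le_of_opNorm_le_of_le (hL g) (WithLp.norm_snd_le _ u)
  have hδsnd : ‖δ g u.snd‖ ≤ D * ‖u‖ :=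
    (δ g).le_of_opNorm_le_of_le (hδD g) (WithLp.norm_snd_le _ u)
  calc ‖triangularRep L δ hδ g u‖
      = ‖WithLp.toLp 2 (L g u.fst + δ g u.snd, (0 : V)) + .toLp 2 ((0 : V), L g u.snd)‖ := by
        rw [← WithLp.toLp_add, Prod.mk_add_mk, add_zero, zero_add, triangularRep_apply]
    _ ≤ ‖L g u.fst + δ g u.snd‖ + ‖L g u.snd‖ := by
        exact (norm_add_le _ _).trans_eq
          (congrArg₂ (· + ·) (WithLp.norm_toLp_fst 2 V V _) (WithLp.norm_toLp_snd 2 V V _))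
    _ ≤ C * ‖u‖ + D * ‖u‖ + C * ‖u‖ := by
        gcongr
        exact norm_add_le_of_le hfst hδsnd
    _ = (C + D + C) * ‖u‖ := by ring

end Triangular

theorem Unitarizable.exists_inner_derivation (hG : Unitarizable G) {V : Type}
    [NormedAddCommGroup V] [InnerProductSpace ℂ V] [CompleteSpace V] {L : G →* (V →L[ℂ] V)}
    {C D : ℝ} (hL : ∀ g, ‖L g‖ ≤ C) {δ : G → (V →L[ℂ] V)}
    (hδ : ∀ g h, δ (g * h) = L g * δ h + δ g * L h) (hδD : ∀ g, ‖δ g‖ ≤ D) :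
    ∃ B : V →L[ℂ] V, ∀ g, δ g = L g * B - B * L g := by
  let e := WithLp.prodContinuousLinearEquiv 2 ℂ V V
  let M : Submodule ℂ (WithLp 2 (V × V)) := (ContinuousLinearMap.snd ℂ V V ∘L e).ker
  have hM : ∀ u, u ∈ M ↔ u.snd = 0 := fun u => Iff.rfl
  obtain ⟨P, hP, hPM, hPπ⟩ :=
    (hG _ _ (uniformlyBoundedRep_triangularRep (hδ := hδ) hL hδD)).exists_projection
      (M := M) (isClosed_ker _) fun g u hu => by
        rw [hM] at hu ⊢
        simp [triangularRep_apply, hu]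
  refine ⟨.fst ℂ V V ∘L (e : _ →L[ℂ] V × V) ∘L P ∘L e.symm ∘L .inr ℂ V V, fun g => ?_⟩
  ext v
  have hsplit : triangularRep L δ hδ g (.toLp 2 (0, v)) =
      .toLp 2 (δ g v, 0) + .toLp 2 (0, L g v) := by
    rw [triangularRep_apply, ← WithLp.toLp_add]
    simp
  have h := congrArg WithLp.fst (hPπ g (.toLp 2 (0, v)))
  have hδM : WithLp.toLp 2 (δ g v, 0) ∈ M := by simp [hM]
  rw [hsplit, map_add, hPM _ hδM, triangularRep_apply, (hM _).1 (hP _)] at h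
  simpa [e] using eq_sub_of_add_eq h

end Unitarizable

section Schur

variable {ι κ : Type*} {C : ℝ≥0}

theorem RowBounded.sum_sq_sum_mul_le {a : ι → κ → ℝ≥0} (hrow : RowBounded a C)
    (hcol : RowBounded (fun t s => a s t) C) (x : κ → ℝ≥0) (Y : Finset ι) (X : Finset κ) :
    ∑ s ∈ Y, (∑ t ∈ X, a s t * x t) ^ 2 ≤ C ^ 2 * ∑ t ∈ X, x t ^ 2 :=
  calc ∑ s ∈ Y, (∑ t ∈ X, a s t * x t) ^ 2
      ≤ ∑ s ∈ Y, (∑ t ∈ X, a s t) * ∑ t ∈ X, a s t * x t ^ 2 :=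
        Finset.sum_le_sum fun s _ => Finset.sum_sq_le_sum_mul_sum_of_sq_le_mul _
          (fun _ _ => zero_le) (fun _ _ => zero_le) fun _ _ => (by ring : _ = _).le
    _ ≤ ∑ s ∈ Y, C * ∑ t ∈ X, a s t * x t ^ 2 := by
        gcongr with s
        exact hrow s X
    _ = C * ∑ t ∈ X, (∑ s ∈ Y, a s t) * x t ^ 2 := by
        rw [← Finset.mul_sum, Finset.sum_comm]
        simp only [Finset.sum_mul]
    _ ≤ C * ∑ t ∈ X, C * x t ^ 2 := by
        gcongr with t
        exact hcol t Y
    _ = C ^ 2 * ∑ t ∈ X, x t ^ 2 := by rw [← Finset.mul_sum, ← mul_assoc, sq]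

theorem RowBounded.memℓp {a : ι → κ → ℝ≥0} (ha : RowBounded a C) (s : ι) :
    Memℓp (fun t => ((a s t : ℝ) : ℂ)) 2 := by
  refine Memℓp.of_exponent_ge (q := 1) (memℓp_gen' (C := C) fun X => ?_) (by norm_num)
  simpa using NNReal.coe_le_coe.2 (ha s X)

variable {𝕜 : Type*} [RCLike 𝕜]

/-- The rows and the columns of the matrix `d` have `ℓ¹`-norm at most `C`. -/
structure SchurBounded (d : ι → κ → 𝕜) (C : ℝ≥0) : Prop where
  row : RowBounded (fun s t => ‖d s t‖₊) C
  col : RowBounded (fun t s => ‖d s t‖₊) C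

namespace SchurBounded

variable {d : ι → κ → 𝕜}

theorem summable_mul (hd : SchurBounded d C) (v : ℓ²(κ, 𝕜)) (s : ι) :
    Summable fun t => d s t * v t := by
  have hds : Summable fun t => ‖d s t‖ :=
    summable_of_sum_le (c := C) (fun _ => norm_nonneg _) fun X => by
      simpa using NNReal.coe_le_coe.2 (hd.row s X)
  refine Summable.of_norm_bounded (hds.mul_right ‖v‖) fun t => ?_
  rw [norm_mul]
  gcongr
  exact lp.norm_apply_le_norm two_ne_zero v t

theorem sum_norm_sq_le (hd : SchurBounded d C) (v : ℓ²(κ, 𝕜)) (Y : Finset ι) :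
    ∑ s ∈ Y, ‖∑' t, d s t * v t‖ ^ 2 ≤ (C * ‖v‖) ^ 2 := by
  have hlim : Tendsto (fun X : Finset κ => ∑ s ∈ Y, ‖∑ t ∈ X, d s t * v t‖ ^ 2) atTop
      (𝓝 (∑ s ∈ Y, ‖∑' t, d s t * v t‖ ^ 2)) :=
    tendsto_finsetSum _ fun s _ => ((hd.summable_mul v s).hasSum.norm).pow 2
  refine le_of_tendsto' hlim fun X => ?_
  have hv : ∑ t ∈ X, ‖v t‖ ^ 2 ≤ ‖v‖ ^ 2 := by
    simpa using lp.sum_rpow_le_norm_rpow (p := 2) (by simp) v X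
  have hdv : ∑ s ∈ Y, (∑ t ∈ X, ‖d s t‖ * ‖v t‖) ^ 2 ≤ C ^ 2 * ∑ t ∈ X, ‖v t‖ ^ 2 := by
    simpa using NNReal.coe_le_coe.2 (hd.row.sum_sq_sum_mul_le hd.col (fun t => ‖v t‖₊) Y X)
  calc ∑ s ∈ Y, ‖∑ t ∈ X, d s t * v t‖ ^ 2 ≤ ∑ s ∈ Y, (∑ t ∈ X, ‖d s t‖ * ‖v t‖) ^ 2 := by
        gcongr with s
        exact norm_sum_le_of_le X fun t _ => (norm_mul _ _).le
    _ ≤ C ^ 2 * ‖v‖ ^ 2 := hdv.trans (by gcongr)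
    _ = (C * ‖v‖) ^ 2 := by ring

/-- The operator on `ℓ²` with matrix `d`; it is bounded by Schur's test. -/
noncomputable def toCLM (hd : SchurBounded d C) : ℓ²(κ, 𝕜) →L[𝕜] ℓ²(ι, 𝕜) :=
  LinearMap.mkContinuous
    { toFun := fun v => ⟨fun s => ∑' t, d s t * v t,
        memℓp_gen' (C := (C * ‖v‖) ^ 2) fun Y => by simpa using hd.sum_norm_sq_le v Y⟩
      map_add' := fun v w => by
        ext s
        exact (tsum_congr fun t => mul_add _ _ _).trans
          ((hd.summable_mul v s).tsum_add (hd.summable_mul w s))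
      map_smul' := fun c v => by
        ext s
        simp [mul_left_comm, tsum_mul_left] }
    C fun v => lp.norm_le_of_forall_sum_le (by simp) (by positivity) fun Y => by
      simpa using hd.sum_norm_sq_le v Y

theorem toCLM_apply (hd : SchurBounded d C) (v : ℓ²(κ, 𝕜)) (s : ι) :
    hd.toCLM v s = ∑' t, d s t * v t := rfl

theorem toCLM_single [DecidableEq κ] (hd : SchurBounded d C) (s : ι) (t : κ) :
    hd.toCLM (lp.single 2 t 1) s = d s t := by
  rw [toCLM_apply, tsum_eq_single t fun t' ht' => by simp [ht']]
  simp

theorem norm_toCLM_le (hd : SchurBounded d C) : ‖hd.toCLM‖ ≤ C :=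
  LinearMap.mkContinuous_norm_le _ C.coe_nonneg _

end SchurBounded

theorem clm_ext_single [DecidableEq κ] {A B : ℓ²(κ, 𝕜) →L[𝕜] ℓ²(ι, 𝕜)}
    (h : ∀ s t, A (lp.single 2 t 1) s = B (lp.single 2 t 1) s) : A = B :=
  lp.ext_continuousLinearMap (by simp) fun t => by
    ext s
    simpa using h s t

theorem memℓp_clm_row [DecidableEq κ] (B : ℓ²(κ, 𝕜) →L[𝕜] ℓ²(ι, 𝕜)) (s : ι) :
    Memℓp (fun t => B (lp.single 2 t 1) s) 2 := by
  classical
  refine Memℓp.star_iff.1 <|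
    (lp.memℓp (ContinuousLinearMap.adjoint B (lp.single 2 s 1))).mono' fun t => ?_
  have hadj := ContinuousLinearMap.adjoint_inner_right B
    (lp.single 2 t (1 : 𝕜)) (lp.single 2 s (1 : 𝕜))
  rw [lp.inner_single_left, lp.inner_single_right] at hadj
  simp only [RCLike.inner_apply, map_one, mul_one, one_mul] at hadj
  simp [hadj]

end Schur

section Littlewood

variable {G : Type*} [Group G]

open scoped Classical in
theorem schurBounded_translation (𝕜 : Type*) [RCLike 𝕜] (g : G) :
    SchurBounded (fun s t : G => if g⁻¹ * s = t then (1 : 𝕜) else 0) 1 := by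
  constructor <;> simp only [apply_ite nnnorm, nnnorm_one, nnnorm_zero]
  · exact rowBounded_one_of_subsingleton fun s t t' h h' => h.symm.trans h'
  · exact rowBounded_one_of_subsingleton fun t s s' h h' => mul_left_cancel (h.trans h'.symm)

theorem toCLM_translation_apply {𝕜 : Type*} [RCLike 𝕜] (g : G) (v : ℓ²(G, 𝕜)) (s : G) :
    (schurBounded_translation 𝕜 g).toCLM v s = v (g⁻¹ * s) := by
  simp [SchurBounded.toCLM_apply]

/-- The left regular representation of `G` on `ℓ²(G)`. -/
noncomputable def leftRegularRep (𝕜 G : Type*) [RCLike 𝕜] [Group G] :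
    G →* (ℓ²(G, 𝕜) →L[𝕜] ℓ²(G, 𝕜)) where
  toFun g := (schurBounded_translation 𝕜 g).toCLM
  map_one' := by ext; simp [toCLM_translation_apply]
  map_mul' g h := by ext; simp [toCLM_translation_apply, mul_assoc]

theorem leftRegularRep_apply {𝕜 : Type*} [RCLike 𝕜] (g : G) (v : ℓ²(G, 𝕜)) (s : G) :
    leftRegularRep 𝕜 G g v s = v (g⁻¹ * s) :=
  toCLM_translation_apply g v s

theorem leftRegularRep_single {𝕜 : Type*} [RCLike 𝕜] [DecidableEq G] (g t : G) :
    leftRegularRep 𝕜 G g (lp.single 2 t 1) = lp.single 2 (g * t) 1 := by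
  ext s
  simp only [leftRegularRep_apply, lp.single_apply, Pi.single_apply, inv_mul_eq_iff_eq_mul]

theorem norm_leftRegularRep_le (𝕜 : Type*) [RCLike 𝕜] (g : G) : ‖leftRegularRep 𝕜 G g‖ ≤ 1 :=
  (schurBounded_translation 𝕜 g).norm_toCLM_le

/-- The function `f` is a *Littlewood function* with constant `C` if the translation-invariant
matrix `f (s⁻¹ * t)` is Littlewood bounded by `C`. -/
def IsLittlewoodFunction (f : G → ℝ≥0) (C : ℝ≥0) : Prop :=
  LittlewoodBounded (fun s t => f (s⁻¹ * t)) C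

theorem nnnorm_ofReal_sub_le (x y : ℝ≥0) : ‖((x : ℝ) - (y : ℝ) : ℂ)‖₊ ≤ x + y :=
  (nnnorm_sub_le _ _).trans_eq (by simp)

variable {f : G → ℝ≥0} {C : ℝ≥0} {a b : G → G → ℝ≥0}

theorem schurBounded_translate_sub (ha : RowBounded a C) (hb : RowBounded (fun t s => b s t) C)
    (hab : ∀ s t, f (s⁻¹ * t) = a s t + b s t) (g : G) :
    SchurBounded (fun s t => ((a (g⁻¹ * s) t : ℝ) - (a s (g * t) : ℝ) : ℂ)) (C + C) where
  row := ((ha.comp (g⁻¹ * ·) Function.injective_id).add (ha.comp id (mul_right_injective g))).mono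
    fun s t => nnnorm_ofReal_sub_le _ _
  col := by
    refine ((hb.comp (g * ·) Function.injective_id).add
      (hb.comp id (mul_right_injective g⁻¹))).mono fun t s => ?_
    have habg : a (g⁻¹ * s) t + b (g⁻¹ * s) t = a s (g * t) + b s (g * t) := by
      simp [← hab, mul_assoc]
    have hsub : ((a (g⁻¹ * s) t : ℝ) - (a s (g * t) : ℝ) : ℂ) =
        (b s (g * t) : ℝ) - (b (g⁻¹ * s) t : ℝ) := by
      rw [sub_eq_sub_iff_add_eq_add, add_comm ((b s (g * t) : ℝ) : ℂ)]
      exact_mod_cast habg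
    rw [hsub]
    exact nnnorm_ofReal_sub_le _ _

theorem Unitarizable.exists_clm_sub_invariant {G : Type} [Group G] [DecidableEq G]
    (hG : Unitarizable G) {f : G → ℝ≥0} {a b : G → G → ℝ≥0} (ha : RowBounded a C)
    (hb : RowBounded (fun t s => b s t) C) (hab : ∀ s t, f (s⁻¹ * t) = a s t + b s t) :
    ∃ B : ℓ²(G, ℂ) →L[ℂ] ℓ²(G, ℂ), ∀ g s t,
      ((a (g⁻¹ * s) t : ℝ) : ℂ) - B (lp.single 2 t 1) (g⁻¹ * s) =
        (a s (g * t) : ℝ) - B (lp.single 2 (g * t) 1) s := by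
  have hd := schurBounded_translate_sub ha hb hab
  obtain ⟨B, hB⟩ := hG.exists_inner_derivation (L := leftRegularRep ℂ G)
    (norm_leftRegularRep_le ℂ) (δ := fun g => (hd g).toCLM)
    (fun g h => clm_ext_single fun s t => by
      simp [SchurBounded.toCLM_single, leftRegularRep_single, leftRegularRep_apply, mul_assoc])
    (fun g => (hd g).norm_toCLM_le)
  refine ⟨B, fun g s t => ?_⟩
  have h := congrArg (fun T : ℓ²(G, ℂ) →L[ℂ] ℓ²(G, ℂ) => T (lp.single 2 t 1) s) (hB g)
  simp only [SchurBounded.toCLM_single, sub_apply, lp.coeFn_sub,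
    Pi.sub_apply, mul_apply_eq_comp, leftRegularRep_apply,
    leftRegularRep_single] at h
  linear_combination h

/-- The difference `a - B` is translation invariant, so `f t` is the sum of the entries of `a - B`
at `(1, t)` and of `B + b` at `(t⁻¹, 1)`, and each of these is square summable in `t`. -/
theorem IsLittlewoodFunction.summable_sq {G : Type} [Group G] {f : G → ℝ≥0}
    (hf : IsLittlewoodFunction f C) (hG : Unitarizable G) : Summable fun g => f g ^ 2 := by
  classical
  obtain ⟨a, b, ha, hb, hab⟩ := hf
  have hab' : ∀ s t, f (s⁻¹ * t) = a s t + b s t := fun s t => congrFun₂ hab s t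
  obtain ⟨B, hB⟩ := hG.exists_clm_sub_invariant ha hb hab'
  have hcol : Memℓp (fun s => B (lp.single 2 1 1) s + (b s 1 : ℝ)) 2 :=
    (lp.memℓp _).add (hb.memℓp 1)
  have hcol' : Memℓp (fun t => B (lp.single 2 1 1) t⁻¹ + (b t⁻¹ 1 : ℝ)) 2 := by
    rw [memℓp_gen_iff (by simp)] at hcol ⊢
    exact (Equiv.inv G).summable_iff.2 hcol
  have hfℓ : Memℓp (fun t => ((f t : ℝ) : ℂ)) 2 := by
    convert ((ha.memℓp 1).sub (memℓp_clm_row B 1)).add hcol' using 1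
    ext t
    have hft : f t = a t⁻¹ 1 + b t⁻¹ 1 := by simpa using hab' t⁻¹ 1
    have hBt := hB t 1 1
    simp only [mul_one] at hBt
    simp only [hft, Pi.add_apply, Pi.sub_apply, NNReal.coe_add, Complex.ofReal_add]
    linear_combination hBt
  rw [← NNReal.summable_coe]
  simpa using (memℓp_gen_iff (by simp)).1 hfℓ

/-- Gliding hump: a sum `∑ 2⁻ᵐ fₘ` with `‖fₘ‖₂² ≥ 16ᵐ` is not square summable. -/
theorem not_unitarizable_of_isLittlewoodFunction {G : Type} [Group G] {C : ℝ≥0}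
    (h : ∀ R : ℝ≥0, ∃ (f : G → ℝ≥0) (T : Finset G), IsLittlewoodFunction f C ∧
      R ≤ ∑ g ∈ T, f g ^ 2) : ¬ Unitarizable G := by
  intro hG
  choose f T hf hT using fun m : ℕ => h (16 ^ m)
  have hC : Summable fun m : ℕ => (1 / 2 : ℝ≥0) ^ m * C :=
    (NNReal.summable_geometric (by norm_num)).mul_right C
  let F : G → ℝ≥0 := fun g => ∑' m, (1 / 2 : ℝ≥0) ^ m * f m g
  have hF : IsLittlewoodFunction F (∑' m : ℕ, (1 / 2 : ℝ≥0) ^ m * C) :=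
    .tsum hC fun m => (hf m).const_mul _
  have hle : ∀ m g, (1 / 2 : ℝ≥0) ^ m * f m g ≤ F g := fun m g => by
    have hsum : Summable fun m => (1 / 2 : ℝ≥0) ^ m * f m g :=
      NNReal.summable_of_le (fun m => by
        simpa [mul_add] using mul_le_mul_right ((hf m).apply_le 1 g) ((1 / 2 : ℝ≥0) ^ m))
        (hC.add hC)
    exact hsum.le_tsum' m
  have hlarge : ∀ m : ℕ, (4 : ℝ≥0) ^ m ≤ ∑' g, F g ^ 2 := fun m =>
    calc (4 : ℝ≥0) ^ m = ((1 / 2) ^ m) ^ 2 * 16 ^ m := by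
          rw [← pow_mul, mul_comm m, pow_mul, ← mul_pow]
          norm_num
      _ ≤ ((1 / 2) ^ m) ^ 2 * ∑ g ∈ T m, f m g ^ 2 := by gcongr; exact hT m
      _ = ∑ g ∈ T m, ((1 / 2) ^ m * f m g) ^ 2 := by simp only [Finset.mul_sum, mul_pow]
      _ ≤ ∑ g ∈ T m, F g ^ 2 := by gcongr with g; exact hle m g
      _ ≤ ∑' g, F g ^ 2 := (hF.summable_sq hG).sum_le_tsum _ fun _ _ => zero_le
  obtain ⟨m, hm⟩ := pow_unbounded_of_one_lt (∑' g, F g ^ 2) (by norm_num : (1 : ℝ≥0) < 4)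
  exact (hlarge m).not_gt hm

end Littlewood

section FirstBetti

variable (k : Type*) {G : Type*} [Field k] [Group G]

/-- The first Betti number of the group `G` over the field `k`: the dimension of the space of
homomorphisms from `G` to `k`. -/
noncomputable def firstBetti (k G : Type*) [Field k] [Group G] : ℕ :=
  Module.finrank k (Additive G →+ k)

/-- Evaluation at `x` as a linear functional on the homomorphisms from `G` to `k`. -/
def evalDual (x : G) : Module.Dual k (Additive G →+ k) where
  toFun φ := φ (.ofMul x)
  map_add' _ _ := rfl
  map_smul' _ _ := rfl

theorem evalDual_apply (x : G) (φ : Additive G →+ k) : evalDual k x φ = φ (.ofMul x) := rfl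

theorem evalDual_mul (x y : G) : evalDual k (x * y) = evalDual k x + evalDual k y :=
  LinearMap.ext fun φ => φ.map_add _ _

variable {k}

theorem addMonoidHom_ext_of_closure_eq_top {M : Type*} [AddMonoid M] {S : Set G}
    (hS : Subgroup.closure S = ⊤) {φ ψ : Additive G →+ M}
    (h : ∀ s ∈ S, φ (.ofMul s) = ψ (.ofMul s)) : φ = ψ :=
  AddMonoidHom.toMultiplicativeRight.injective (MonoidHom.eq_of_eqOn_dense hS h)

theorem apply_eq_apply_one_of_forall_mul_eq {S : Set G} (hS : Subgroup.closure S = ⊤) {α : Sort*}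
    {f : G → α} (hf : ∀ x, ∀ s ∈ S, f (x * s) = f x) (x : G) : f x = f 1 :=
  Subgroup.closure_induction_right (p := fun x _ => f x = f 1) rfl
    (fun x _ s hs hx => (hf x s hs).trans hx)
    (fun x _ s hs hx => by rw [← hx, ← hf (x * s⁻¹) s hs, inv_mul_cancel_right])
    (hS ▸ Subgroup.mem_top x)

theorem exists_linearIndepOn_dual {V ι : Type*} [AddCommGroup V] [Module k V]
    (c : ι → Module.Dual k V) {A : Finset ι} (hA : ∀ φ, (∀ i ∈ A, c i φ = 0) → φ = 0) :
    ∃ B ⊆ A, LinearIndepOn k c (B : Set ι) ∧ Module.finrank k V ≤ B.card := by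
  obtain ⟨B, hBA, -, hspan, hB⟩ :=
    exists_linearIndepOn_extension (linearIndepOn_empty k c) (A : Set ι).empty_subset
  lift B to Finset ι using A.finite_toSet.subset hBA
  refine ⟨B, Finset.coe_subset.1 hBA, hB, ?_⟩
  have hinj : Function.Injective (LinearMap.pi fun i : B => c i) := by
    refine (injective_iff_map_eq_zero _).2 fun φ hφ => hA φ fun i hi => ?_
    have hle : Submodule.span k (c '' B) ≤ (Module.Dual.eval k V φ).ker :=
      Submodule.span_le.2 <| by
        rintro _ ⟨j, hj, rfl⟩
        exact congrFun hφ ⟨j, hj⟩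
    exact hle (hspan ⟨i, hi, rfl⟩)
  simpa using LinearMap.finrank_le_finrank_of_injective hinj

end FirstBetti

section Schreier

variable {k K : Type*} [Field k] [Group K]

theorem exists_equivariant_retraction (H : Subgroup K) :
    ∃ r : K → H, ∀ (h : H) (x : K), r (h * x) = h * r x := by
  obtain ⟨T, hT, -⟩ := H.exists_isComplement_right 1
  exact ⟨fun x => (hT.equiv x).1, fun h x => congrArg Prod.fst (hT.equiv_mul_left h x)⟩

variable {H : Subgroup K}

theorem evalDual_retraction_sub_eq [H.Normal] {r : K → H}
    (hr : ∀ (h : H) (x : K), r (h * x) = h * r x) {x y : K} (hxy : (x : K ⧸ H) = y) (s : K) :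
    evalDual k (r (x * s)) - evalDual k (r x) = evalDual k (r (y * s)) - evalDual k (r y) := by
  obtain ⟨h, rfl⟩ : ∃ h : H, y = h * x :=
    ⟨⟨y / x, QuotientGroup.eq_iff_div_mem.1 hxy.symm⟩, by simp⟩
  simp [mul_assoc, hr, evalDual_mul]

/-- The homomorphisms from `H` to `k` are determined by the differences of their extensions along
the edges of the Schreier graph of `H` with respect to `T`. -/
theorem exists_linearIndepOn_schreier_edges [H.Normal] [H.FiniteIndex] {T : Finset K}
    (hT : Subgroup.closure (T : Set K) = ⊤) :
    ∃ (d : K → Module.Dual k (Additive H →+ k)) (c : (K ⧸ H) × K → Module.Dual k (Additive H →+ k))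
      (B : Finset ((K ⧸ H) × K)), (∀ x s : K, d (x * s) - d x = c (x, s)) ∧ (∀ e ∈ B, e.2 ∈ T) ∧
      LinearIndepOn k c (B : Set ((K ⧸ H) × K)) ∧ firstBetti k H ≤ B.card := by
  obtain ⟨r, hr⟩ := exists_equivariant_retraction H
  let d : K → Module.Dual k (Additive H →+ k) := fun x => evalDual k (r x)
  let c : (K ⧸ H) × K → Module.Dual k (Additive H →+ k) := fun e =>
    d (e.1.out * e.2) - d e.1.out
  have hdc : ∀ x s : K, d (x * s) - d x = c (x, s) := fun x s =>
    evalDual_retraction_sub_eq hr (QuotientGroup.out_eq' _).symm s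
  have := Fintype.ofFinite (K ⧸ H)
  obtain ⟨B, hBT, hB, hcard⟩ := exists_linearIndepOn_dual c (A := Finset.univ ×ˢ T) fun φ hφ => by
    have hconst := apply_eq_apply_one_of_forall_mul_eq hT (f := fun x => d x φ) fun x s hs => by
      rw [← sub_eq_zero, ← LinearMap.sub_apply, hdc]
      exact hφ _ (by simpa using hs)
    refine AddMonoidHom.ext fun h => ?_
    have hd : d h.toMul φ = φ h + d 1 φ := by
      simpa [d, evalDual_mul, evalDual_apply] using
        congrArg (fun x => evalDual k x φ) (hr h.toMul 1)
    simpa [hconst] using hd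
  exact ⟨d, c, B, hdc, fun e he => (Finset.mem_product.1 (hBT he)).2, hB, hcard⟩

open scoped Classical in
theorem littlewoodBounded_schreier_edges [H.Normal] {M : Type*} [AddCommGroup M] [Module k M]
    {d : K → M} {c : (K ⧸ H) × K → M} (hdc : ∀ x s : K, d (x * s) - d x = c (x, s))
    {B : Finset ((K ⧸ H) × K)} (hB : LinearIndepOn k c (B : Set ((K ⧸ H) × K)))
    {X : Finset K} (hX : Set.InjOn ((↑) : K → K ⧸ H) X) (q : K ⧸ H) :
    LittlewoodBounded
      (fun s t => if s ∈ X ∧ t ∈ X ∧ (q * (s : K ⧸ H), s⁻¹ * t) ∈ B then 1 else 0) 1 := by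
  obtain ⟨g, rfl⟩ := QuotientGroup.mk_surjective q
  let A : Finset (K × K) := {e ∈ X ×ˢ X | ((g : K ⧸ H) * (e.1 : K ⧸ H), e.1⁻¹ * e.2) ∈ B}
  have hA : LinearIndepOn k (fun e : K × K => d (g * e.2) - d (g * e.1)) (A : Set (K × K)) := by
    have hAB : (A : Set (K × K)).MapsTo (fun e => ((g : K ⧸ H) * e.1, e.1⁻¹ * e.2)) B :=
      fun e he => (Finset.mem_filter.1 he).2
    have hinj : Set.InjOn (fun e : K × K => ((g : K ⧸ H) * (e.1 : K ⧸ H), e.1⁻¹ * e.2)) A := by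
      rintro ⟨s, t⟩ hs ⟨s', t'⟩ hs' h
      have hX' : ∀ e ∈ A, e.1 ∈ X := fun e he =>
        (Finset.mem_product.1 (Finset.mem_filter.1 he).1).1
      simp only [Prod.mk.injEq, mul_right_inj] at h
      obtain rfl := hX (hX' _ hs) (hX' _ hs') h.1
      simpa using h.2
    refine ((hB.mono hAB.image_subset).comp_of_image hinj).congr fun e _ => ?_
    simp [← QuotientGroup.mk_mul, ← hdc, mul_assoc]
  simpa [A, and_assoc] using littlewoodBounded_of_linearIndepOn (fun x => d (g * x)) hA

end Schreier

section Averaging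

variable {K : Type*} [Group K]

open scoped Classical in
theorem exists_littlewoodBounded_average (k : Type*) [Field k] {S : Finset K}
    (hS : Subgroup.closure (S : Set K) = ⊤) {X : Finset K} (H : Subgroup K) [H.Normal]
    [H.FiniteIndex] (hX : Set.InjOn ((↑) : K → K ⧸ H) X) :
    ∃ (f : K → ℝ≥0) (u : K → K → ℝ≥0), LittlewoodBounded u 1 ∧
      (∀ s ∈ X, ∀ t ∈ X, u s t = f (s⁻¹ * t)) ∧ firstBetti k H ≤ H.index * ∑ y ∈ S, f y := by
  obtain ⟨d, c, B, hdc, hBS, hB, hcard⟩ := exists_linearIndepOn_schreier_edges (k := k) (H := H) hS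
  have := Fintype.ofFinite (K ⧸ H)
  have hindex : (Fintype.card (K ⧸ H) : ℝ≥0) = H.index := by
    rw [Subgroup.index_eq_card, Nat.card_eq_fintype_card]
  have hne : (H.index : ℝ≥0) ≠ 0 := by simpa using H.index_ne_zero_of_finite
  let f : K → ℝ≥0 := fun y => ∑ q : K ⧸ H, (H.index : ℝ≥0)⁻¹ * if (q, y) ∈ B then 1 else 0
  have hu := LittlewoodBounded.tsum (hasSum_fintype _).summable fun q : K ⧸ H =>
    (littlewoodBounded_schreier_edges hdc hB hX q).const_mul (H.index : ℝ≥0)⁻¹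
  have hone : ∑' _ : K ⧸ H, (H.index : ℝ≥0)⁻¹ * 1 = 1 := by
    simp [tsum_fintype, hindex, mul_inv_cancel₀ hne]
  refine ⟨f, _, hone ▸ hu, fun s hs t ht => ?_, ?_⟩
  · simp only [hs, ht, true_and, tsum_fintype, f]
    exact Equiv.sum_comp (Equiv.mulRight (s : K ⧸ H))
      fun q => (H.index : ℝ≥0)⁻¹ * if (q, s⁻¹ * t) ∈ B then 1 else 0
  · have hf : (H.index : ℝ≥0) * ∑ y ∈ S, f y = B.card := by
      have hB' : B ⊆ Finset.univ ×ˢ S := fun e he => by simpa using hBS e he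
      simp only [f, ← Finset.mul_sum, mul_inv_cancel_left₀ hne]
      rw [Finset.sum_comm, ← Finset.sum_product', Finset.sum_boole, Finset.filter_mem_eq_inter,
        Finset.inter_eq_right.2 hB']
    rw [hf]
    exact_mod_cast hcard

theorem exists_isLittlewoodFunction_le_sum (k : Type*) [Field k] {S : Finset K}
    (hS : Subgroup.closure (S : Set K) = ⊤) {r : ℝ≥0}
    (h : ∀ X : Finset K, ∃ H : Subgroup K, H.Normal ∧ H.FiniteIndex ∧
      Set.InjOn ((↑) : K → K ⧸ H) X ∧ H.index * r ≤ firstBetti k H) :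
    ∃ f : K → ℝ≥0, IsLittlewoodFunction f 1 ∧ r ≤ ∑ y ∈ S, f y := by
  choose H hN hF hX hr using h
  choose f u hu huf hf using fun X => exists_littlewoodBounded_average k hS (H X) (hX X)
  let U : Ultrafilter (Finset K) := .of atTop
  obtain ⟨v, hv, huv⟩ := LittlewoodBounded.exists_tendsto U hu
  have hev : ∀ s t, ∀ᶠ X in (U : Filter (Finset K)), u X s t = f X (s⁻¹ * t) := fun s t =>
    Ultrafilter.of_le atTop <| by
      classical
      filter_upwards [eventually_ge_atTop {s, t}] with X hst
      exact huf X s (hst (by simp)) t (hst (by simp))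
  have hfv : ∀ s t, Tendsto (fun X => f X (s⁻¹ * t)) U (𝓝 (v s t)) := fun s t =>
    (huv s t).congr' (hev s t)
  refine ⟨v 1, ?_, ?_⟩
  · have hinv : ∀ s t, v 1 (s⁻¹ * t) = v s t := fun s t =>
      tendsto_nhds_unique (by simpa using hfv 1 (s⁻¹ * t)) (hfv s t)
    simpa only [IsLittlewoodFunction, hinv] using hv
  · refine ge_of_tendsto' (tendsto_finsetSum S fun y _ => by simpa using hfv 1 y) fun X => ?_
    have hpos : (0 : ℝ≥0) < (H X).index := by
      exact_mod_cast Nat.pos_of_ne_zero (H X).index_ne_zero_of_finite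
    exact le_of_mul_le_mul_left ((hr X).trans (hf X)) hpos

end Averaging

section Extension

variable {G : Type*} [Group G]

theorem IsLittlewoodFunction.extend {K : Subgroup G} {f : K → ℝ≥0} {C : ℝ≥0}
    (hf : IsLittlewoodFunction f C) :
    IsLittlewoodFunction (Function.extend Subtype.val f 0) C := by
  classical
  obtain ⟨T, hT, -⟩ := K.exists_isComplement_left 1
  have h := LittlewoodBounded.blockDiagonal hf hT.equiv.injective
  have heq : ∀ s t, (if (hT.equiv s).1 = (hT.equiv t).1 then
      f ((hT.equiv s).2⁻¹ * (hT.equiv t).2) else 0) =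
        Function.extend Subtype.val f 0 (s⁻¹ * t) := fun s t => by
    by_cases hst : ∃ κ : K, (κ : G) = s⁻¹ * t
    · obtain ⟨κ, hκ⟩ := hst
      obtain rfl : t = s * κ := by rw [hκ, mul_inv_cancel_left]
      rw [← hκ, Subtype.val_injective.extend_apply, hT.equiv_mul_right]
      simp
    · rw [Function.extend_apply' _ _ _ hst, if_neg, Pi.zero_apply]
      refine fun h => hst ⟨(hT.equiv s).2⁻¹ * (hT.equiv t).2, ?_⟩
      simp [hT.equiv_snd_eq_inv_mul, h]
  simpa only [IsLittlewoodFunction, heq] using h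

end Extension

section Pullback

variable (k : Type*) {G H : Type*} [Field k] [Group G] [Group H]

/-- Precomposition with `f`, as a linear map between spaces of homomorphisms to `k`. -/
def homPullback (f : G →* H) : (Additive H →+ k) →ₗ[k] (Additive G →+ k) where
  toFun φ := φ.comp f.toAdditive
  map_add' _ _ := rfl
  map_smul' _ _ := rfl

theorem firstBetti_congr (e : G ≃* H) : firstBetti k G = firstBetti k H :=
  (LinearEquiv.ofLinearMap (homPullback k e.symm.toMonoidHom) (homPullback k e.toMonoidHom)
    (by ext φ x; exact congrArg φ (e.apply_symm_apply x))
    (by ext φ x; exact congrArg φ (e.symm_apply_apply x))).finrank_eq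

end Pullback

section ResiduallyFinite

variable {G : Type*} [Group G] [Group.ResiduallyFinite G]

theorem exists_normal_finiteIndex_injOn (X : Finset G) :
    ∃ H : Subgroup G, H.Normal ∧ H.FiniteIndex ∧ Set.InjOn ((↑) : G → G ⧸ H) X := by
  have hsep : ∀ p : X × X, ∃ H : FiniteIndexNormalSubgroup G,
      ((p.1.1 : G ⧸ H.toSubgroup) = p.2.1 → p.1.1 = p.2.1) := fun p => by
    by_cases h : p.1.1 = p.2.1
    · exact ⟨.ofSubgroup ⊤, fun _ => h⟩
    · obtain ⟨H, hH⟩ := Group.exists_finiteIndexNormalSubgroup_of_residuallyFinite _ _ h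
      exact ⟨H, fun h' => absurd h' hH⟩
  choose H hH using hsep
  refine ⟨⨅ p, (H p).toSubgroup, Subgroup.normal_iInf_normal fun p => (H p).isNormal',
    Subgroup.finiteIndex_iInf fun p => (H p).isFiniteIndex', fun x hx y hy hxy => ?_⟩
  refine hH (⟨x, hx⟩, ⟨y, hy⟩) (QuotientGroup.eq.2 ?_)
  exact Subgroup.mem_iInf.1 (QuotientGroup.eq.1 hxy) _

theorem exists_normal_finiteIndex_le_index [Infinite G] (n : ℕ) :
    ∃ H : Subgroup G, H.Normal ∧ H.FiniteIndex ∧ n ≤ H.index := by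
  obtain ⟨X, hX⟩ := Infinite.exists_superset_card_eq (∅ : Finset G) n (by simp)
  obtain ⟨H, hN, hF, hinj⟩ := exists_normal_finiteIndex_injOn X
  refine ⟨H, hN, hF, ?_⟩
  have := Fintype.ofFinite (G ⧸ H)
  rw [← hX.2, Subgroup.index_eq_card, Nat.card_eq_fintype_card]
  exact Finset.card_le_card_of_injOn _ (fun _ _ => Finset.mem_univ _) hinj

end ResiduallyFinite

section Criterion

variable {k G : Type*} [Field k] [Group G] {c : ℝ≥0}

theorem infinite_of_mul_index_le_firstBetti (hc : 0 < c)
    (h : ∀ (H : Subgroup G) [H.Normal] [H.FiniteIndex], c * H.index ≤ firstBetti k H) :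
    Infinite G := by
  by_contra hG
  rw [not_infinite_iff_finite] at hG
  have hbot : firstBetti k (⊥ : Subgroup G) = 0 := by
    have : Subsingleton (Additive (⊥ : Subgroup G) →+ k) :=
      ⟨fun φ ψ => AddMonoidHom.ext fun x => by
        rw [Subsingleton.elim x 0, map_zero, map_zero]⟩
    exact Module.finrank_zero_of_subsingleton
  have hle := h ⊥
  rw [hbot] at hle
  have : (0 : ℝ≥0) < (⊥ : Subgroup G).index := by
    exact_mod_cast Nat.pos_of_ne_zero (⊥ : Subgroup G).index_ne_zero_of_finite
  exact (mul_pos hc this).not_ge (by simpa using hle)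

theorem exists_isLittlewoodFunction_of_finiteIndex [Group.ResiduallyFinite G]
    (h : ∀ (H : Subgroup G) [H.Normal] [H.FiniteIndex], c * H.index ≤ firstBetti k H)
    {S : Finset G} (hS : Subgroup.closure (S : Set G) = ⊤) (K : Subgroup G) [K.Normal]
    [K.FiniteIndex] :
    ∃ (f : G → ℝ≥0) (T : Finset G), IsLittlewoodFunction f 1 ∧ T.card ≤ K.index * S.card ∧
      c * K.index ≤ ∑ y ∈ T, f y := by
  obtain ⟨T, hTcard, hT⟩ := Subgroup.exists_finset_card_le_mul K hS
  obtain ⟨f, hf, hle⟩ := exists_isLittlewoodFunction_le_sum k hT (r := c * K.index) fun X => by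
    obtain ⟨L, hN, hF, hL⟩ := exists_normal_finiteIndex_injOn (X.map (.subtype _))
    refine ⟨(L ⊓ K).subgroupOf K, inferInstance, inferInstance, fun x hx y hy hxy => ?_, ?_⟩
    · refine Subtype.ext (hL (by simpa using hx) (by simpa using hy) (QuotientGroup.eq.2 ?_))
      exact (Subgroup.mem_subgroupOf.1 (QuotientGroup.eq.1 hxy)).1
    · have hindex : ((L ⊓ K).subgroupOf K).index * K.index = (L ⊓ K).index :=
        Subgroup.relIndex_mul_index inf_le_right
      rw [firstBetti_congr k (Subgroup.subgroupOfEquivOfLe inf_le_right), mul_left_comm]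
      exact_mod_cast hindex ▸ h (L ⊓ K)
  refine ⟨_, T.map (.subtype _), hf.extend, by simpa using hTcard, ?_⟩
  simpa [Subtype.val_injective.extend_apply] using hle

theorem not_unitarizable_of_mul_index_le_firstBetti {G : Type} [Group G] [Group.FG G]
    [Group.ResiduallyFinite G] (hc : 0 < c)
    (h : ∀ (H : Subgroup G) [H.Normal] [H.FiniteIndex], c * H.index ≤ firstBetti k H) :
    ¬ Unitarizable G := by
  have := infinite_of_mul_index_le_firstBetti hc h
  obtain ⟨S, hS⟩ := Group.FG.out (G := G)
  refine not_unitarizable_of_isLittlewoodFunction (C := 1) fun R => ?_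
  obtain ⟨n, hn⟩ := exists_nat_gt (S.card * R / c ^ 2)
  obtain ⟨K, hN, hF, hnK⟩ := exists_normal_finiteIndex_le_index (G := G) n
  obtain ⟨f, T, hf, hTcard, hle⟩ := exists_isLittlewoodFunction_of_finiteIndex h hS K
  have hK : (0 : ℝ≥0) < K.index := by
    exact_mod_cast Nat.pos_of_ne_zero K.index_ne_zero_of_finite
  refine ⟨f, T, hf, le_of_not_gt fun hR => ?_⟩
  have hCS : (c * K.index) ^ 2 ≤ K.index * S.card * ∑ y ∈ T, f y ^ 2 := calc
    (c * K.index) ^ 2 ≤ (∑ y ∈ T, f y) ^ 2 := by gcongr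
    _ ≤ T.card * ∑ y ∈ T, f y ^ 2 := sq_sum_le_card_mul_sum_sq
    _ ≤ K.index * S.card * ∑ y ∈ T, f y ^ 2 := by gcongr; exact_mod_cast hTcard
  have hKS : K.index * c ^ 2 ≤ S.card * R := by
    refine le_of_mul_le_mul_left ?_ hK
    calc K.index * (K.index * c ^ 2) = (c * K.index) ^ 2 := by ring
      _ ≤ K.index * S.card * ∑ y ∈ T, f y ^ 2 := hCS
      _ ≤ K.index * S.card * R := by gcongr
      _ = K.index * (S.card * R) := by ring
  rw [div_lt_iff₀ (by positivity)] at hn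
  refine (hn.trans_le ?_).not_ge hKS
  gcongr

end Criterion

section FiniteDimensional

variable (k : Type*) {G H : Type*} [Field k] [Group G] [Group H]

instance moduleFinite_addMonoidHom [Group.FG G] : Module.Finite k (Additive G →+ k) := by
  obtain ⟨S, hS⟩ := Group.FG.out (G := G)
  refine Module.Finite.of_injective (LinearMap.pi fun s : S => evalDual k s.1) fun φ ψ h => ?_
  exact addMonoidHom_ext_of_closure_eq_top hS fun s hs => congrFun h ⟨s, hs⟩

theorem firstBetti_le_add_card [Group.FG G] {f : G →* H} (hf : Function.Surjective f)
    {R : Finset G} (hR : ∀ φ : Additive G →+ k, (∀ x ∈ R, φ (.ofMul x) = 0) →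
      ∀ x ∈ f.ker, φ (.ofMul x) = 0) :
    firstBetti k G ≤ firstBetti k H + R.card := by
  have := Group.fg_of_surjective hf
  let res : (Additive G →+ k) →ₗ[k] (R → k) := LinearMap.pi fun x => evalDual k x.1
  have hker : res.ker ≤ (homPullback k f).range := fun φ hφ => by
    have hφR := hR φ fun x hx => congrFun hφ ⟨x, hx⟩
    refine ⟨AddMonoidHom.liftOfSurjective f.toAdditive hf ⟨φ, fun x hx => hφR x.toMul hx⟩, ?_⟩
    exact AddMonoidHom.liftOfRightInverse_comp f.toAdditive _ _ _
  calc firstBetti k G = Module.finrank k res.range + Module.finrank k res.ker :=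
      res.finrank_range_add_finrank_ker.symm
    _ ≤ R.card + Module.finrank k (homPullback k f).range := by
      gcongr
      · simpa using res.range.finrank_le
      · exact Submodule.finrank_mono hker
    _ ≤ R.card + firstBetti k H := by gcongr; exact LinearMap.finrank_range_le _
    _ = firstBetti k H + R.card := add_comm _ _

end FiniteDimensional

section FreeGroup

variable {α : Type*}

/-- The free group acts on `Q × U` on the right, each generator moving along its edge from the first
component and adding the weight of that edge to the second; `d` is read off from the orbit of
`(1, 0)`. -/
theorem exists_freeGroup_integral {Q U : Type*} [Group Q] [AddCommGroup U]
    (p : FreeGroup α →* Q) (e : Q → α → U) :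
    ∃ d : FreeGroup α → U, d 1 = 0 ∧ ∀ x b, d (x * .of b) = d x + e (p x) b := by
  let σ : α → Equiv.Perm (Q × U) := fun b =>
    (Equiv.mulRight (p (.of b))).prodShear fun q => Equiv.addRight (e q b)
  let ρ : FreeGroup α →* (Equiv.Perm (Q × U))ᵐᵒᵖ := FreeGroup.lift fun b => .op (σ b)
  let state : FreeGroup α → Q × U := fun x => (ρ x).unop (1, 0)
  have hstate : ∀ x b, state (x * .of b) = σ b (state x) := fun x b => by
    simp [state, ρ]
  have hfst : ∀ x, (state x).1 = p x := fun x => by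
    have h := apply_eq_apply_one_of_forall_mul_eq (FreeGroup.closure_range_of α)
      (f := fun x => (state x).1 * (p x)⁻¹) (by
        rintro x _ ⟨b, rfl⟩
        simp [hstate, σ]) x
    exact mul_inv_eq_one.1 (h.trans (by simp [state]))
  refine ⟨fun x => (state x).2, by simp [state], fun x b => ?_⟩
  simp [hstate, σ, hfst]

variable (k : Type*) [Field k] {Q : Type*} [Group Q]

/-- The coboundary operator from functions on the vertices to functions on the edges of the
Schreier graph of `p : FreeGroup α →* Q`. -/
def schreierCoboundary (p : FreeGroup α →* Q) : (Q → k) →ₗ[k] (Q × α → k) where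
  toFun f e := f (e.1 * p (.of e.2)) - f e.1
  map_add' f g := by ext; simp [add_sub_add_comm]
  map_smul' a f := by ext; simp [mul_sub]

theorem exists_schreier_integral (H : Subgroup (FreeGroup α)) [H.Normal] :
    ∃ d : FreeGroup α → Module.Dual k ((FreeGroup α ⧸ H) × α → k),
      (∀ x b c, d (x * .of b) c = d x c + c (x, b)) ∧ ∀ h ∈ H, ∀ x, d (h * x) = d h + d x := by
  obtain ⟨d, hd1, hd⟩ := exists_freeGroup_integral (QuotientGroup.mk' H)
    fun q b => (LinearMap.proj (q, b) : Module.Dual k ((FreeGroup α ⧸ H) × α → k))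
  refine ⟨d, fun x b c => by rw [hd]; rfl, fun h hh x => ?_⟩
  have hh' : (h : FreeGroup α ⧸ H) = 1 := (QuotientGroup.eq_one_iff h).2 hh
  have hconst := apply_eq_apply_one_of_forall_mul_eq (FreeGroup.closure_range_of α)
    (f := fun x => d (h * x) - d x) (by
      rintro x _ ⟨b, rfl⟩
      simp [← mul_assoc, hd, hh']) x
  simpa [hd1, sub_eq_iff_eq_add] using hconst

theorem index_mul_card_le_index_add_firstBetti [Fintype α] (H : Subgroup (FreeGroup α)) [H.Normal]
    [H.FiniteIndex] : H.index * Fintype.card α ≤ H.index + firstBetti k H := by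
  have := Fintype.ofFinite (FreeGroup α ⧸ H)
  have hindex : H.index = Fintype.card (FreeGroup α ⧸ H) := by
    rw [Subgroup.index_eq_card, Nat.card_eq_fintype_card]
  obtain ⟨d, hd, hdH⟩ := exists_schreier_integral k H
  let res : ((FreeGroup α ⧸ H) × α → k) →ₗ[k] (Additive H →+ k) :=
    { toFun := fun c => AddMonoidHom.mk' (fun h => d h.toMul c) fun h h' => by
        simp [hdH _ h.toMul.2]
      map_add' := fun c c' => by ext; simp
      map_smul' := fun a c => by ext; simp }
  have hker : res.ker ≤ (schreierCoboundary k (QuotientGroup.mk' H)).range := fun c hc => by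
    have hout : ∀ x, d x c = d (x : FreeGroup α ⧸ H).out c := fun x => by
      have hx : x / (x : FreeGroup α ⧸ H).out ∈ H := by
        rw [← QuotientGroup.eq_iff_div_mem, QuotientGroup.out_eq']
      have hc0 : d (x / (x : FreeGroup α ⧸ H).out) c = 0 := DFunLike.congr_fun hc (.ofMul ⟨_, hx⟩)
      simpa [hc0] using DFunLike.congr_fun (hdH _ hx (x : FreeGroup α ⧸ H).out) c
    refine ⟨fun q => d q.out c, funext fun ⟨q, b⟩ => ?_⟩
    obtain ⟨x, rfl⟩ := QuotientGroup.mk_surjective q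
    have hb := hout (x * .of b)
    rw [hd, hout x] at hb
    exact sub_eq_of_eq_add' hb.symm
  calc H.index * Fintype.card α
    _ = Module.finrank k ((FreeGroup α ⧸ H) × α → k) := by simp [hindex]
    _ = Module.finrank k res.range + Module.finrank k res.ker :=
      res.finrank_range_add_finrank_ker.symm
    _ ≤ firstBetti k H + Module.finrank k ((FreeGroup α ⧸ H) → k) := by
      gcongr
      · exact Submodule.finrank_le _
      · exact (Submodule.finrank_mono hker).trans (LinearMap.finrank_range_le _)
    _ = H.index + firstBetti k H := by simp [hindex, add_comm]

end FreeGroup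

section Relators

variable {G : Type*} [Group G] {H : Subgroup G} [H.Normal]

theorem map_conjNormal_mul_of_mem {k : Type*} [AddCommGroup k] (φ : Additive H →+ k) (g : G)
    {h : G} (hh : h ∈ H) (v : H) :
    φ (.ofMul (MulAut.conjNormal (g * h) v)) = φ (.ofMul (MulAut.conjNormal g v)) := by
  lift h to H using hh
  simp [MulAut.conjNormal_val]

/-- If `w ^ p ^ n ∉ H`, then up to conjugation by `H` the conjugates of the relator are indexed by
the cosets of `⟨w⟩ H`. Otherwise the relator is a `p`-th power in `H`, and imposes no condition. -/
theorem exists_card_mul_pow_le_index (k : Type*) [Ring k] [H.FiniteIndex] {p n : ℕ}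
    [Fact p.Prime] [CharP k p] {w : G} (hw : w ^ p ^ (n + 1) ∈ H) :
    ∃ R : Finset H, R.card * p ^ (n + 1) ≤ H.index ∧ ∀ φ : Additive H →+ k,
      (∀ x ∈ R, φ (.ofMul x) = 0) →
        ∀ g : G, φ (.ofMul (MulAut.conjNormal g ⟨w ^ p ^ (n + 1), hw⟩)) = 0 := by
  classical
  by_cases hwn : w ^ p ^ n ∈ H
  · refine ⟨∅, by simp, fun φ _ g => ?_⟩
    have hpow : (⟨w ^ p ^ (n + 1), hw⟩ : H) = ⟨w ^ p ^ n, hwn⟩ ^ p :=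
      Subtype.ext (by simp [pow_succ, pow_mul])
    rw [hpow, map_pow, ofMul_pow, map_nsmul, nsmul_eq_mul, CharP.cast_eq_zero, zero_mul]
  let Z : Subgroup (G ⧸ H) := .zpowers (w : G ⧸ H)
  let L : Subgroup G := Z.comap (QuotientGroup.mk' H)
  have hL : L.index * p ^ (n + 1) = H.index := by
    have hZ : Nat.card Z = p ^ (n + 1) := by
      rw [Nat.card_zpowers]
      refine orderOf_eq_prime_pow ?_ ?_ <;> rwa [← QuotientGroup.mk_pow, QuotientGroup.eq_one_iff]
    rw [Subgroup.index_comap_of_surjective _ (QuotientGroup.mk'_surjective H), ← hZ,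
      Z.index_mul_card, Subgroup.index_eq_card]
  have : L.FiniteIndex := ⟨left_ne_zero_of_mul (hL ▸ H.index_ne_zero_of_finite)⟩
  have := Fintype.ofFinite (G ⧸ L)
  refine ⟨Finset.univ.image fun q : G ⧸ L => MulAut.conjNormal q.out ⟨w ^ p ^ (n + 1), hw⟩, ?_,
    fun φ hφ g => ?_⟩
  · rw [← hL, Subgroup.index_eq_card, Nat.card_eq_fintype_card]
    exact Nat.mul_le_mul_right _ Finset.card_image_le
  · have hg : (g : G ⧸ L).out⁻¹ * g ∈ L := QuotientGroup.eq.1 (QuotientGroup.out_eq' _)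
    obtain ⟨j, hj⟩ := Subgroup.mem_zpowers_iff.1 hg
    have hj' : (w ^ j)⁻¹ * ((g : G ⧸ L).out⁻¹ * g) ∈ H := QuotientGroup.eq.1 hj
    have hconj : MulAut.conjNormal (w ^ j) (⟨w ^ p ^ (n + 1), hw⟩ : H) = ⟨w ^ p ^ (n + 1), hw⟩ :=
      Subtype.ext <| by
        rw [MulAut.conjNormal_apply, mul_inv_eq_iff_eq_mul]
        exact ((Commute.refl w).zpow_left j).pow_right _
    have h := map_conjNormal_mul_of_mem φ ((g : G ⧸ L).out * w ^ j) hj' ⟨w ^ p ^ (n + 1), hw⟩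
    rw [mul_assoc, mul_inv_cancel_left, mul_inv_cancel_left, map_mul, MulAut.mul_apply,
      hconj] at h
    exact h.trans (hφ _ (Finset.mem_image_of_mem _ (Finset.mem_univ _)))

theorem exists_two_mul_card_le_index (k : Type*) [Ring k] [H.FiniteIndex] {p : ℕ}
    [Fact p.Prime] [CharP k p] {w : ℕ → G} (hw : ∀ i, w i ^ p ^ (i + 2) ∈ H) :
    ∃ R : Finset H, 2 * R.card ≤ H.index ∧ ∀ φ : Additive H →+ k,
      (∀ x ∈ R, φ (.ofMul x) = 0) →
        ∀ i (g : G), φ (.ofMul (MulAut.conjNormal g ⟨w i ^ p ^ (i + 2), hw i⟩)) = 0 := by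
  classical
  choose R hRcard hR using fun i => exists_card_mul_pow_le_index k (hw i)
  have hR4 : ∀ i, (R i).card * (4 * 2 ^ i) ≤ H.index := fun i => calc
    (R i).card * (4 * 2 ^ i) = (R i).card * 2 ^ (i + 2) := by ring
    _ ≤ (R i).card * p ^ (i + 2) := by gcongr; exact (Fact.out : p.Prime).two_le
    _ ≤ H.index := hRcard i
  refine ⟨(Finset.range H.index).biUnion R, ?_, fun φ hφ i g => hR i φ (fun x hx => hφ x ?_) g⟩
  · have hsum : ((∑ i ∈ Finset.range H.index, (R i).card : ℕ) : ℝ) ≤ H.index / 4 * 2 := calc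
      _ ≤ ∑ i ∈ Finset.range H.index, (H.index / 4 : ℝ) * (1 / 2) ^ i := by
        push_cast
        refine Finset.sum_le_sum fun i _ => ?_
        have h : ((R i).card * (4 * 2 ^ i) : ℝ) ≤ H.index := by exact_mod_cast hR4 i
        rw [one_div, inv_pow, ← div_eq_mul_inv, le_div_iff₀ (by positivity)]
        linarith
      _ ≤ H.index / 4 * 2 := by
        rw [← Finset.mul_sum]
        gcongr
        exact sum_geometric_two_le _
    have h2 : 2 * ∑ i ∈ Finset.range H.index, (R i).card ≤ H.index := by
      rify
      push_cast at hsum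
      linarith
    exact (Nat.mul_le_mul_left 2 Finset.card_biUnion_le).trans h2
  · have hi : i < H.index := calc
      i < 2 ^ i := Nat.lt_two_pow_self
      _ ≤ 4 * 2 ^ i := by omega
      _ ≤ (R i).card * (4 * 2 ^ i) := Nat.le_mul_of_pos_left _ (Finset.card_pos.2 ⟨x, hx⟩)
      _ ≤ H.index := hR4 i
    exact Finset.mem_biUnion.2 ⟨i, Finset.mem_range.2 hi, hx⟩

end Relators

section FiniteResidual

variable {G : Type*} [Group G]

/-- The intersection of all normal subgroups of finite index containing `R`. The quotient by it is
the largest residually finite quotient of the group in which `R` becomes trivial. -/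
def finiteResidual (R : Set G) : Subgroup G :=
  sInf {H | H.Normal ∧ H.FiniteIndex ∧ R ⊆ H}

instance (R : Set G) : (finiteResidual R).Normal := by
  rw [finiteResidual, sInf_eq_iInf']
  exact Subgroup.normal_iInf_normal fun H => H.2.1

variable {R : Set G}

theorem subset_finiteResidual : R ⊆ finiteResidual R := fun _ hx =>
  Subgroup.mem_sInf.2 fun _ hH => hH.2.2 hx

theorem finiteResidual_le {K : Subgroup G} [K.FiniteIndex] (hK : ∀ r ∈ R, ∀ g, g * r * g⁻¹ ∈ K) :
    finiteResidual R ≤ K :=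
  (sInf_le ⟨inferInstance, inferInstance, hK⟩ : finiteResidual R ≤ K.normalCore).trans
    K.normalCore_le

instance : Group.ResiduallyFinite (G ⧸ finiteResidual R) := by
  refine Group.residuallyFinite_of_forall_exists_finite_monoidHom fun x hx => ?_
  obtain ⟨x, rfl⟩ := QuotientGroup.mk_surjective x
  rw [ne_eq, QuotientGroup.eq_one_iff, finiteResidual, Subgroup.mem_sInf] at hx
  push Not at hx
  obtain ⟨H, ⟨hN, hF, hR⟩, hx⟩ := hx
  refine ⟨G ⧸ H, inferInstance, inferInstance,
    QuotientGroup.map _ H (.id G) (sInf_le ⟨hN, hF, hR⟩), ?_⟩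
  exact fun h => hx ((QuotientGroup.eq_one_iff x).1 h)

theorem eq_zero_of_mem_finiteResidual {k : Type*} [AddGroup k] [Finite k] {H : Subgroup G}
    [H.Normal] [H.FiniteIndex] (hRH : R ⊆ H) (φ : Additive H →+ k)
    (hφ : ∀ (r) (hr : r ∈ R) (g : G), φ (.ofMul (MulAut.conjNormal g ⟨r, hRH hr⟩)) = 0)
    {x : H} (hx : (x : G) ∈ finiteResidual R) : φ (.ofMul x) = 0 := by
  let K : Subgroup H := (AddMonoidHom.toMultiplicativeRight φ).ker
  have : (K.map H.subtype).FiniteIndex := ⟨by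
    rw [Subgroup.index_map_subtype]
    exact mul_ne_zero K.index_ne_zero_of_finite H.index_ne_zero_of_finite⟩
  have hle : finiteResidual R ≤ K.map H.subtype := finiteResidual_le fun r hr g =>
    ⟨_, hφ r hr g, MulAut.conjNormal_apply g _⟩
  obtain ⟨y, hy, hyx⟩ := hle hx
  obtain rfl := H.subtype_injective hyx
  exact hy

end FiniteResidual

section Quotient

variable {p : ℕ} [Fact p.Prime]

theorem index_le_two_mul_firstBetti (k : Type*) [Field k] [Finite k] [CharP k p]
    {w : ℕ → FreeGroup Bool}
    (H : Subgroup (FreeGroup Bool ⧸ finiteResidual (Set.range fun i => w i ^ p ^ (i + 2))))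
    [H.Normal] [H.FiniteIndex] : H.index ≤ 2 * firstBetti k H := by
  set N := finiteResidual (Set.range fun i => w i ^ p ^ (i + 2))
  let L : Subgroup (FreeGroup Bool) := H.comap (QuotientGroup.mk' N)
  have hsurj : Function.Surjective (QuotientGroup.mk' N) := QuotientGroup.mk'_surjective N
  have hLH : L.index = H.index := H.index_comap_of_surjective hsurj
  have : L.FiniteIndex := ⟨hLH ▸ H.index_ne_zero_of_finite⟩
  have hNL : N ≤ L := by
    simpa using (QuotientGroup.mk' N).ker_le_comap H
  have hRL : Set.range (fun i => w i ^ p ^ (i + 2)) ⊆ L := subset_finiteResidual.trans hNL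
  obtain ⟨R, hRcard, hR⟩ := exists_two_mul_card_le_index k (H := L) fun i => hRL ⟨i, rfl⟩
  have hfree := index_mul_card_le_index_add_firstBetti k L
  have hquot : firstBetti k L ≤ firstBetti k H + R.card :=
    firstBetti_le_add_card k
      (MonoidHom.subgroupComap_surjective_of_surjective (QuotientGroup.mk' N) H hsurj)
      fun φ hφ x hx => eq_zero_of_mem_finiteResidual hRL φ
        (by rintro _ ⟨i, rfl⟩ g; exact hR φ hφ i g)
        ((QuotientGroup.eq_one_iff _).1 (congrArg Subtype.val hx))
  rw [Fintype.card_bool] at hfree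
  omega

theorem isPGroup_quotient_finiteResidual {G : Type*} [Group G] {w : ℕ → G}
    (hw : Function.Surjective w) (p : ℕ) :
    IsPGroup p (G ⧸ finiteResidual (Set.range fun i => w i ^ p ^ (i + 2))) := fun x => by
  obtain ⟨x, rfl⟩ := QuotientGroup.mk_surjective x
  obtain ⟨i, rfl⟩ := hw x
  exact ⟨i + 2, (QuotientGroup.eq_one_iff _).2 (subset_finiteResidual ⟨i, rfl⟩)⟩

end Quotient

theorem exists_fg_torsion_not_unitarizable_general (p : ℕ) [Fact p.Prime] :
    ∃ (G : Type) (_ : Group G), Group.FG G ∧ Group.ResiduallyFinite G ∧ IsPGroup p G ∧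
      ¬ Unitarizable G := by
  have : Countable (FreeGroup Bool) := FreeGroup.toWord_injective.countable
  obtain ⟨w, hw⟩ := exists_surjective_nat (FreeGroup Bool)
  refine ⟨FreeGroup Bool ⧸ finiteResidual (Set.range fun i => w i ^ p ^ (i + 2)), inferInstance,
    inferInstance, inferInstance, isPGroup_quotient_finiteResidual hw p, ?_⟩
  refine not_unitarizable_of_mul_index_le_firstBetti (k := ZMod p) (c := 2⁻¹) (by positivity)
    fun H _ _ => ?_
  rw [inv_mul_le_iff₀ two_pos]
  exact_mod_cast index_le_two_mul_firstBetti (ZMod p) H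

/-- There exists a finitely generated torsion group that is not unitarizable. -/
theorem exists_fg_torsion_not_unitarizable :
    ∃ (G : Type) (_ : Group G), Group.FG G ∧ Monoid.IsTorsion G ∧ ¬ Unitarizable G := by
  obtain ⟨G, _, hfg, -, hp, hG⟩ := exists_fg_torsion_not_unitarizable_general 2
  exact ⟨G, _, hfg, fun g => hp.isOfFinOrder two_ne_zero g, hG⟩
end

section
/- Let G be a group and H a normal subgroup of G such that H contains no non-abelian free subgroup and the quotient group G/H is a torsion group. Then G contains no non-abelian free subgroup. -/
/-! A free basis of a free subgroup of `G` can be replaced by powers of its elements lying in `H`.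
By ping-pong on reduced words these powers are again a free basis of the subgroup they generate,
which is contained in `H`. -/

open Function
open scoped Pointwise

section FreeGroup

open FreeGroup

variable {α : Type*} {k : α → ℕ}

lemma freeGroup_mk_pow_smul_compl_startsWith_subset [DecidableEq α] (w : α × Bool)
    {n : ℕ} (hn : 0 < n) : mk [w] ^ n • (startsWith (w.1, !w.2))ᶜ ⊆ startsWith w := by
  rintro _ ⟨g, hg, rfl⟩
  change mk [w] ^ n * g ∈ startsWith w
  induction n, hn using Nat.le_induction with
  | base => simpa only [zero_add, pow_one] using startsWith_mk_mul g hg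
  | succ n _ ih =>
    have hdisj : Disjoint (startsWith w) (startsWith (w.1, !w.2)) := by
      simp [Prod.ext_iff]
    rw [pow_succ', mul_assoc]
    exact startsWith_mk_mul _ (hdisj.notMem_of_mem_left ih)

lemma freeGroup_lift_of_pow_injective_of_nontrivial [Nontrivial α] (hk : ∀ a, 0 < k a) :
    Injective (lift fun a => of a ^ k a) := by
  classical
  refine injective_lift_of_ping_pong _
    (fun a => startsWith (a, true)) (fun a => startsWith (a, false))
    (fun a => ⟨of a, by simp [startsWith]⟩)
    (fun a b hab => by simpa using hab) (fun a b hab => by simpa using hab) (fun a b => by simp)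
    (fun a => freeGroup_mk_pow_smul_compl_startsWith_subset (a, true) (hk a)) fun a => ?_
  have hinv : (of a ^ k a)⁻¹ = mk [(a, false)] ^ k a := (inv_pow _ _).symm
  simpa only [Pi.inv_apply, hinv, Bool.not_false] using
    freeGroup_mk_pow_smul_compl_startsWith_subset (a, false) (hk a)

theorem freeGroup_lift_of_pow_injective (hk : ∀ a, 0 < k a) :
    Injective (lift fun a => of a ^ k a) := by
  -- The ping-pong lemma needs at least two letters, so two spare ones are adjoined.
  have : Nontrivial (α ⊕ Bool) := Sum.inr_injective.nontrivial
  let k' : α ⊕ Bool → ℕ := Sum.elim k fun _ => 1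
  have hk' : ∀ b, 0 < k' b := by
    rintro (a | _)
    exacts [hk a, one_pos]
  have hcomm : (map (Sum.inl : α → α ⊕ Bool)).comp (lift fun a => of a ^ k a) =
      (lift fun b => of b ^ k' b).comp (map Sum.inl) := by
    ext a
    simp [k']
  refine Injective.of_comp (f := map (Sum.inl : α → α ⊕ Bool)) ?_
  rw [← MonoidHom.coe_comp, hcomm]
  exact (freeGroup_lift_of_pow_injective_of_nontrivial hk').comp (map_injective Sum.inl_injective)

end FreeGroup

section Subgroup

variable {G : Type*} [Group G]

lemma exists_subgroup_mulEquiv_iff_exists_injective {F : Type*} [Group F] :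
    (∃ K : Subgroup G, Nonempty (K ≃* F)) ↔ ∃ φ : F →* G, Injective φ := by
  constructor
  · rintro ⟨K, ⟨e⟩⟩
    exact ⟨K.subtype.comp e.symm.toMonoidHom, K.subtype_injective.comp e.symm.injective⟩
  · rintro ⟨φ, hφ⟩
    exact ⟨φ.range, ⟨(MonoidHom.ofInjective hφ).symm⟩⟩

lemma exists_injective_freeGroup_of_pow_mem {α : Type*} (H : Subgroup G) {φ : FreeGroup α →* G}
    (hφ : Injective φ) (hpow : ∀ a, ∃ n, 0 < n ∧ φ (.of a) ^ n ∈ H) :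
    ∃ ψ : FreeGroup α →* H, Injective ψ := by
  choose k hk hkH using hpow
  let ψ : FreeGroup α →* H := FreeGroup.lift fun a => ⟨φ (.of a) ^ k a, hkH a⟩
  have hψ : H.subtype.comp ψ = φ.comp (FreeGroup.lift fun a => .of a ^ k a) := by
    ext a
    simp [ψ]
  refine ⟨ψ, Injective.of_comp (f := H.subtype) ?_⟩
  rw [← MonoidHom.coe_comp, hψ]
  exact hφ.comp (freeGroup_lift_of_pow_injective hk)

lemma isOfFinOrder_quotient_mk_iff_exists_pow_mem {H : Subgroup G} [H.Normal] {g : G} :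
    IsOfFinOrder (g : G ⧸ H) ↔ ∃ n, 0 < n ∧ g ^ n ∈ H := by
  simp only [isOfFinOrder_iff_pow_eq_one, ← QuotientGroup.mk_pow, QuotientGroup.eq_one_iff]

theorem no_free_subgroup_of_normal_of_torsion_quotient_general {α : Type*} (H : Subgroup G)
    (hH : ¬ ∃ K : Subgroup H, Nonempty (K ≃* FreeGroup α))
    (hpow : ∀ g : G, ∃ n, 0 < n ∧ g ^ n ∈ H) :
    ¬ ∃ K : Subgroup G, Nonempty (K ≃* FreeGroup α) := by
  rw [exists_subgroup_mulEquiv_iff_exists_injective] at hH ⊢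
  rintro ⟨φ, hφ⟩
  exact hH (exists_injective_freeGroup_of_pow_mem H hφ fun a => hpow (φ (.of a)))

end Subgroup

/-- Let `G` be a group and `H` a normal subgroup of `G` such that `H` contains no
non-abelian free subgroup and the quotient `G/H` is a torsion group. Then `G`
contains no non-abelian free subgroup. -/
theorem no_free_subgroup_of_normal_of_torsion_quotient {G : Type*} [Group G]
    (H : Subgroup G) [H.Normal]
    (hH : ¬ ∃ K : Subgroup H, Nonempty (K ≃* FreeGroup (Fin 2)))
    (hq : Monoid.IsTorsion (G ⧸ H)) :
    ¬ ∃ K : Subgroup G, Nonempty (K ≃* FreeGroup (Fin 2)) :=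
  no_free_subgroup_of_normal_of_torsion_quotient_general H hH fun g =>
    isOfFinOrder_quotient_mk_iff_exists_pow_mem.mp (hq g)
end

section
/- Let F be a free group (on an arbitrary set of generators). If F contains a nontrivial normal subgroup C that is cyclic, then F is infinite cyclic (isomorphic to the integers). In particular, a non-abelian free group has no nontrivial normal cyclic subgroup. -/
/-!
In a group with unique roots, every element `g` acts on a normal cyclic subgroup `C`
by an automorphism of finite order, so some power of `g` centralizes `C`, and unique roots then
force `g` itself to centralize `C`. Free groups have unique roots, so `C` is central. In a free
group on at least two generators, a nontrivial reduced word that commutes with a generator must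
start with that generator or its inverse, so the center is trivial. Hence a nontrivial `C` leaves
room for exactly one generator.
-/

theorem finite_mulAut_of_isCyclic (G : Type*) [Group G] [IsCyclic G] : Finite (MulAut G) :=
  .of_equiv _ (IsCyclic.mulAutMulEquiv G).symm.toEquiv

section UniqueRoots

variable {G : Type*} [Group G] [IsMulTorsionFree G]

theorem commute_of_commute_pow_left {g c : G} {n : ℕ} (hn : n ≠ 0) (h : Commute (g ^ n) c) :
    Commute g c := by
  have hroot : (c * g * c⁻¹) ^ n = g ^ n := by
    rw [conj_pow, h.symm.mul_inv_cancel]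
  exact (mul_inv_eq_iff_eq_mul.1 (pow_left_injective hn hroot)).symm

theorem le_center_of_isMulTorsion_mulAut {N : Subgroup G} [N.Normal]
    (hN : IsMulTorsion (MulAut N)) : N ≤ Subgroup.center G := by
  intro c hc
  rw [Subgroup.mem_center_iff]
  intro g
  obtain ⟨n, hn, hgn⟩ := isOfFinOrder_iff_pow_eq_one.1 (hN (MulAut.conjNormal g))
  have hconj : g ^ n * c * (g ^ n)⁻¹ = c := by
    rw [← MulAut.conjNormal_apply (g ^ n) ⟨c, hc⟩, map_pow, hgn, MulAut.one_apply]
  exact commute_of_commute_pow_left hn.ne' (mul_inv_eq_iff_eq_mul.1 hconj)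

theorem le_center_of_isCyclic {N : Subgroup G} [N.Normal] [IsCyclic N] :
    N ≤ Subgroup.center G :=
  have := finite_mulAut_of_isCyclic N
  le_center_of_isMulTorsion_mulAut isMulTorsion_of_finite

end UniqueRoots

section FreeGroup

open FreeGroup
open scoped List

variable {X : Type*}

theorem toWord_of_mul_eq_cons [DecidableEq X] {x : X} {c : FreeGroup X}
    (h : (x, false) ∉ c.toWord.head?) : (of x * c).toWord = (x, true) :: c.toWord := by
  have hred : IsReduced ((x, true) :: c.toWord) := by
    refine List.isChain_cons.2 ⟨?_, isReduced_toWord⟩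
    rintro ⟨y, b⟩ hy rfl
    cases b
    · exact absurd hy h
    · rfl
  rw [toWord_mul, toWord_of, List.singleton_append, hred.reduce_eq]

theorem fst_eq_of_commute_of_of_mem_head? [DecidableEq X] {x : X} {c : FreeGroup X}
    (h : Commute (of x) c) {p : X × Bool} (hp : p ∈ c.toWord.head?) : p.1 = x := by
  by_contra hpx
  have hleft : (of x * c).toWord = (x, true) :: c.toWord :=
    toWord_of_mul_eq_cons fun hx => hpx (congrArg Prod.fst (Option.mem_unique hp hx))
  have hsub : (x, true) :: c.toWord <+ c.toWord ++ [(x, true)] := by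
    rw [← hleft, h.eq, ← toWord_of]
    exact toWord_mul_sublist c (of x)
  have hword : (x, true) :: c.toWord = c.toWord ++ [(x, true)] := hsub.eq_of_length (by simp)
  have hhead : (x, true) = p := by
    simpa [List.head?_append, Option.mem_def.1 hp] using congrArg List.head? hword
  exact hpx (congrArg Prod.fst hhead).symm

theorem center_freeGroup_eq_bot [Nontrivial X] : Subgroup.center (FreeGroup X) = ⊥ := by
  classical
  rw [Subgroup.eq_bot_iff_forall]
  intro c hc
  by_contra hc1
  obtain ⟨p, w, hpw⟩ := List.exists_cons_of_ne_nil (mt toWord_eq_nil_iff.1 hc1)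
  obtain ⟨x, hx⟩ := exists_ne p.1
  have hcomm : Commute (of x) c := Subgroup.mem_center_iff.1 hc (of x)
  exact hx (fst_eq_of_commute_of_of_mem_head? hcomm (by simp [hpw])).symm

end FreeGroup

/-- If a free group `F = FreeGroup X` contains a nontrivial normal cyclic subgroup,
then `F` is infinite cyclic, i.e. isomorphic to the (multiplicative) group of integers. -/
theorem freeGroup_infinite_cyclic_of_nontrivial_normal_cyclic_subgroup
    {X : Type*} (C : Subgroup (FreeGroup X)) (hnorm : C.Normal) (hnt : C ≠ ⊥)
    (hcyc : IsCyclic C) :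
    Nonempty (FreeGroup X ≃* Multiplicative ℤ) := by
  have hcenter : C ≤ Subgroup.center (FreeGroup X) := le_center_of_isCyclic
  cases isEmpty_or_nonempty X
  · exact absurd (Subsingleton.elim C ⊥) hnt
  cases subsingleton_or_nontrivial X
  · have := Classical.inhabited_of_nonempty ‹Nonempty X›
    have := Unique.mk' X
    exact ⟨FreeGroup.mulEquivIntOfUnique⟩
  · exact absurd (le_bot_iff.1 (hcenter.trans_eq center_freeGroup_eq_bot)) hnt
end

section
/- Every countable torsion group embeds into a torsion group generated by 2 elements; that is, for every countable torsion group T there exist a torsion group Q generated by two elements and an injective group homomorphism from T into Q. -/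
/-!
Call a subset of a group `Γ` a Sidon set if the quotient of two distinct elements of it determines
them. Let `f : Γ → S` have finite order and a Sidon set as its support, let its values generate
`S`, and let `Q` be the subgroup of the unrestricted wreath product of `S` by `Γ` generated by `Γ`
and `f`. Two translates of `f` by distinct elements have supports meeting in at most one point. If
`f a` and `f b` are nontrivial, the commutator of the corresponding translates is therefore
concentrated at one point, where its value is `⁅f a, f b⁆`, and so `Q` contains the commutator
subgroup of `S`. On the other hand, the values of an element of the base part of `Q` are, at all
but finitely many points, powers of a value of `f`; hence `Q` is torsion as soon as `S` and `Γ`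
are.

A countable torsion group `T` embeds into the commutator subgroup of a countable torsion group: a
constant function with value `t` is the commutator of `t` with a finite-valued function on `T`. A
second wreath product, by a cyclic group of order `3`, moreover makes the larger group generated by
elements whose cube is trivial.

Take for `Γ` the Gupta–Sidki `3`-group, which is infinite, torsion and generated by two elements.
Squaring is injective on it, so it contains an infinite Sidon set, and an `f` supported there can
take all the elements with trivial cube as its values. Thus every countable torsion group embeds
into a torsion group generated by three elements. With `Γ` cyclic of order `7` and `f` carrying
three generators on the Sidon set `{0, 1, 3}`, the number of generators drops to two.
-/

open RegularWreathProduct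
open scoped commutatorElement Pointwise

universe u v

section Groups

lemma isOfFinOrder_of_finite_range {X S : Type*} [Group S] (hS : IsMulTorsion S) {u : X → S}
    (hu : (Set.range u).Finite) : IsOfFinOrder u := by
  have := hu.to_subtype
  have hval : IsOfFinOrder (Subtype.val : Set.range u → S) := .pi fun s => hS s
  obtain ⟨n, hn, h⟩ := isOfFinOrder_iff_pow_eq_one.1 hval
  exact isOfFinOrder_iff_pow_eq_one.2
    ⟨n, hn, funext fun x => congrFun h ⟨u x, Set.mem_range_self x⟩⟩

lemma countable_closure_subgroup {G : Type*} [Group G] {E : Set G} (hE : E.Countable) :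
    Countable (Subgroup.closure E) := by
  have := hE.to_subtype
  have : Countable (FreeGroup E) := Quotient.countable
  rw [← Subtype.range_coe (s := E), ← FreeGroup.range_lift_eq_closure]
  exact (MonoidHom.rangeRestrict_surjective _).countable

lemma exists_closure_range_eq_top {G I : Type*} [Group G] {K : Subgroup G} {g : I → G}
    (hK : K = Subgroup.closure (Set.range g)) :
    ∃ k : I → K, Subgroup.closure (Set.range k) = ⊤ := by
  subst hK
  refine ⟨fun i => ⟨g i, Subgroup.subset_closure ⟨i, rfl⟩⟩, ?_⟩
  rw [← Subgroup.closure_closure_coe_preimage]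
  congr 1
  ext k
  simp [Subtype.ext_iff]

lemma commutator_le_of_closure_eq_top {G : Type*} [Group G] {E : Set G}
    (hE : Subgroup.closure E = ⊤) {C : Subgroup G} [C.Normal]
    (hC : ∀ a ∈ E, ∀ b ∈ E, ⁅a, b⁆ ∈ C) : commutator G ≤ C := by
  rw [← Subgroup.Normal.quotient_commutative_iff_commutator_le]
  have hgen : Subgroup.closure (QuotientGroup.mk' C '' E) = ⊤ := by
    rw [← MonoidHom.map_closure, hE,
      Subgroup.map_top_of_surjective _ (QuotientGroup.mk'_surjective C)]
  have hcomm : IsMulCommutative (Subgroup.closure (QuotientGroup.mk' C '' E)) := by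
    refine Subgroup.isMulCommutative_closure ?_
    rintro _ ⟨a, ha, rfl⟩ _ ⟨b, hb, rfl⟩
    rw [← commutatorElement_eq_one_iff_mul_comm, ← map_commutatorElement]
    exact (QuotientGroup.eq_one_iff _).2 (hC a ha b hb)
  rw [hgen] at hcomm
  refine ⟨⟨fun x y => ?_⟩⟩
  simpa using congrArg Subtype.val (hcomm.1.1 ⟨x, Subgroup.mem_top x⟩ ⟨y, Subgroup.mem_top y⟩)

lemma commutatorElement_eq_mulSingle {X S : Type*} [DecidableEq X] [Group S] {u v : X → S} {x : X}
    (h : ∀ y ≠ x, u y = 1 ∨ v y = 1) : ⁅u, v⁆ = (Pi.mulSingle x ⁅u x, v x⁆ : X → S) := by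
  ext y
  obtain rfl | hy := eq_or_ne y x
  · simp [commutatorElement_def]
  · obtain h | h := h y hy <;> simp [commutatorElement_def, h, hy]

end Groups

section WreathProduct

variable {S Γ : Type*} [Group S] [Group Γ]

/-- The inclusion of the base group into the wreath product. -/
def baseHom : (Γ → S) →* S ≀ᵣ Γ where
  toFun u := ⟨u, 1⟩
  map_one' := rfl
  map_mul' u v := by ext <;> simp

@[simp]
lemma left_baseHom (u : Γ → S) : (baseHom u).left = u := rfl

@[simp]
lemma right_baseHom (u : Γ → S) : (baseHom u).right = 1 := rfl

lemma baseHom_injective : Function.Injective (baseHom : (Γ → S) → S ≀ᵣ Γ) :=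
  fun _ _ h => congrArg left h

lemma inl_mul_baseHom_mul_inv (γ : Γ) (u : Γ → S) :
    inl γ * baseHom u * (inl γ)⁻¹ = baseHom fun g => u (γ⁻¹ * g) := by
  ext <;> simp

lemma commutatorElement_baseHom_inl (u : Γ → S) (γ : Γ) :
    ⁅baseHom u, inl γ⁆ = baseHom fun g => u g * (u (γ⁻¹ * g))⁻¹ := by
  rw [commutatorElement_def, mul_assoc, mul_assoc, ← mul_assoc (inl γ), ← map_inv,
    inl_mul_baseHom_mul_inv, ← map_mul]
  rfl

open Classical in
/-- The inclusion of `S` into the wreath product as the factor of the base group at `1`. -/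
noncomputable def baseSingle : S →* S ≀ᵣ Γ := baseHom.comp (MonoidHom.mulSingle (fun _ => S) 1)

open Classical in
lemma baseSingle_apply (s : S) : (baseSingle s : S ≀ᵣ Γ) = baseHom (Pi.mulSingle 1 s) := rfl

lemma baseSingle_injective : Function.Injective (baseSingle : S → S ≀ᵣ Γ) := by
  classical
  exact fun s t h => Pi.mulSingle_injective (M := fun _ => S) 1 (baseHom_injective h)

lemma isOfFinOrder_of_right_of_left {q : S ≀ᵣ Γ} (hright : IsOfFinOrder q.right)
    (hleft : ∀ m : ℕ, IsOfFinOrder (q ^ m).left) : IsOfFinOrder q := by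
  obtain ⟨m, hm, hqm⟩ := isOfFinOrder_iff_pow_eq_one.1 hright
  have hbase : q ^ m = baseHom (q ^ m).left :=
    RegularWreathProduct.ext rfl ((map_pow rightHom q m).trans hqm)
  refine IsOfFinOrder.of_pow (n := m) ?_ hm.ne'
  rw [hbase]
  exact MonoidHom.isOfFinOrder _ (hleft m)

/-- The subgroup of the wreath product whose base part lies in a translation-invariant group `N` of
functions. -/
def wreathSubgroup (N : Subgroup (Γ → S)) (hN : ∀ u ∈ N, ∀ γ : Γ, (fun g => u (γ * g)) ∈ N) :
    Subgroup (S ≀ᵣ Γ) where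
  carrier := {q | q.left ∈ N}
  one_mem' := N.one_mem
  mul_mem' {a _} ha hb := N.mul_mem ha (hN _ hb a.right⁻¹)
  inv_mem' {a} ha := hN _ (N.inv_mem ha) a.right

lemma isMulTorsion_of_le_wreathSubgroup (hΓ : IsMulTorsion Γ) {N : Subgroup (Γ → S)}
    {hN : ∀ u ∈ N, ∀ γ : Γ, (fun g => u (γ * g)) ∈ N} (hfin : ∀ u ∈ N, IsOfFinOrder u)
    {K : Subgroup (S ≀ᵣ Γ)} (hK : K ≤ wreathSubgroup N hN) : IsMulTorsion K := fun q =>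
  Submonoid.isOfFinOrder_coe.1 <|
    isOfFinOrder_of_right_of_left (hΓ _) fun m => hfin _ (hK (pow_mem q.2 m))

end WreathProduct

section CommutatorEmbedding

/-- The functions with finitely many values. -/
def finiteRange (X S : Type*) [Group S] : Subgroup (X → S) where
  carrier := {u | (Set.range u).Finite}
  one_mem' := (Set.finite_singleton 1).subset (Set.range_subset_iff.2 fun _ => rfl)
  mul_mem' hu hv := (hu.mul hv).subset <|
    Set.range_subset_iff.2 fun x => Set.mul_mem_mul (Set.mem_range_self x) (Set.mem_range_self x)
  inv_mem' hu := hu.inv.subset <| Set.range_subset_iff.2 fun x => Set.inv_mem_inv.2 ⟨x, rfl⟩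

lemma exists_finite_range_mul_inv_eq {G : Type*} [Group G] (hG : IsMulTorsion G) (t : G) :
    ∃ u : G → G, (Set.range u).Finite ∧ ∀ g, u g * (u (t⁻¹ * g))⁻¹ = t := by
  obtain ⟨R, hR, -⟩ := Subgroup.exists_isComplement_right (Subgroup.zpowers t) 1
  have : Finite (Subgroup.zpowers t) := finite_zpowers.2 (hG t)
  -- `u g` is the component of `g` in `⟨t⟩`, relative to a right transversal of `⟨t⟩`.
  refine ⟨fun g => (hR.equiv g).1, (Set.toFinite (Subgroup.zpowers t : Set G)).subset ?_,
    fun g => ?_⟩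
  · rintro _ ⟨g, rfl⟩
    exact (hR.equiv g).1.2
  · have h := hR.equiv_mul_left ⟨t⁻¹, inv_mem (Subgroup.mem_zpowers t)⟩ g
    change (hR.equiv (t⁻¹ * g)) = _ at h
    simp [h]

/-- The groups `T` embedding into the commutator subgroup of `G`. -/
def EmbedsInCommutator (T G : Type*) [Group T] [Group G] : Prop :=
  ∃ f : T →* G, Function.Injective f ∧ f.range ≤ commutator G

lemma embedsInCommutator_of_range_le {T G : Type*} [Group T] [Group G] {f : T →* G}
    (hf : Function.Injective f) {K : Subgroup G} (hK : f.range ≤ ⁅K, K⁆) :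
    EmbedsInCommutator T K := by
  refine ⟨f.codRestrict K fun t => Subgroup.commutator_le_self K (hK ⟨t, rfl⟩),
    fun s t h => hf (congrArg Subtype.val h), ?_⟩
  rw [← Subgroup.map_subtype_le_map_subtype, Subgroup.map_subtype_commutator, MonoidHom.map_range]
  exact hK

lemma EmbedsInCommutator.of_map_le {T G H : Type*} [Group T] [Group G] [Group H]
    (hT : EmbedsInCommutator T G) {f : G →* H} (hf : Function.Injective f) {K : Subgroup H}
    (hK : (commutator G).map f ≤ ⁅K, K⁆) : EmbedsInCommutator T K := by
  obtain ⟨i, hi, hrange⟩ := hT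
  refine embedsInCommutator_of_range_le (f := f.comp i) (hf.comp hi) ?_
  rw [← MonoidHom.map_range]
  exact (Subgroup.map_mono hrange).trans hK

lemma EmbedsInCommutator.of_injective {T G H : Type*} [Group T] [Group G] [Group H]
    (hT : EmbedsInCommutator T G) {f : G →* H} (hf : Function.Injective f) :
    EmbedsInCommutator T H := by
  obtain ⟨i, hi, hrange⟩ := hT
  refine ⟨f.comp i, hf.comp hi, ?_⟩
  rw [← MonoidHom.map_range]
  refine (Subgroup.map_mono hrange).trans ?_
  rw [commutator_def, Subgroup.map_commutator]
  exact Subgroup.commutator_mono le_top le_top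

theorem exists_embedsInCommutator (T : Type u) [Group T] [Countable T] (hT : IsMulTorsion T) :
    ∃ (G : Type u) (_ : Group G), Countable G ∧ IsMulTorsion G ∧ EmbedsInCommutator T G := by
  choose u hu hut using exists_finite_range_mul_inv_eq hT
  let E : Set (T ≀ᵣ T) := Set.range (fun t => baseHom (u t)) ∪ Set.range inl
  have hconst : (baseHom.comp (Pi.constMonoidHom T T)).range ≤
      ⁅Subgroup.closure E, Subgroup.closure E⁆ := by
    rintro _ ⟨t, rfl⟩
    have h : ⁅baseHom (u t), inl t⁆ ∈ ⁅Subgroup.closure E, Subgroup.closure E⁆ :=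
      Subgroup.commutator_mem_commutator (Subgroup.subset_closure (.inl ⟨t, rfl⟩))
        (Subgroup.subset_closure (.inr ⟨t, rfl⟩))
    rw [commutatorElement_baseHom_inl] at h
    simp only [hut] at h
    exact h
  have hE : Subgroup.closure E ≤ wreathSubgroup (finiteRange T T)
      fun v hv γ => hv.subset (Set.range_comp_subset_range (γ * ·) v) := by
    refine (Subgroup.closure_le _).2 ?_
    rintro _ (⟨t, rfl⟩ | ⟨t, rfl⟩)
    · exact hu t
    · exact (finiteRange T T).one_mem
  refine ⟨Subgroup.closure E, inferInstance,
    countable_closure_subgroup ((Set.countable_range _).union (Set.countable_range _)), ?_,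
    embedsInCommutator_of_range_le (baseHom_injective.comp Function.const_injective) hconst⟩
  exact isMulTorsion_of_le_wreathSubgroup hT (fun v hv => isOfFinOrder_of_finite_range hT hv) hE

/-- The supports `{1, γ}` and `{1, δ}` of the two inner commutators in `⁅⁅a, γ⁆, ⁅b, δ⁆⁆`, where `a`
and `b` are placed at `1`, meet only in `1`. -/
lemma map_baseSingle_commutator_le {S Γ : Type*} [Group S] [Group Γ] {γ δ : Γ} (hγ : γ ≠ 1)
    (hδ : δ ≠ 1) (hγδ : γ ≠ δ) {K : Subgroup (S ≀ᵣ Γ)} (hγK : ∀ x, x * inl γ * x⁻¹ ∈ K)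
    (hδK : ∀ x, x * inl δ * x⁻¹ ∈ K) : (commutator S).map baseSingle ≤ ⁅K, K⁆ := by
  classical
  have commutator_mem {ε : Γ} (hε : ∀ x, x * inl ε * x⁻¹ ∈ K) (x : S ≀ᵣ Γ) : ⁅x, inl ε⁆ ∈ K :=
    mul_mem (hε x) (inv_mem (by simpa using hε 1))
  rw [Subgroup.map_le_iff_le_comap, commutator_def, Subgroup.commutator_le]
  intro a _ b _
  suffices h : baseSingle ⁅a, b⁆ = ⁅⁅baseSingle a, inl γ⁆, ⁅baseSingle b, inl δ⁆⁆ by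
    rw [Subgroup.mem_comap, h]
    exact Subgroup.commutator_mem_commutator (commutator_mem hγK _) (commutator_mem hδK _)
  simp only [baseSingle_apply, commutatorElement_baseHom_inl, ← map_commutatorElement]
  rw [commutatorElement_eq_mulSingle (x := 1)]
  · simp [hγ, hδ]
  · intro g hg
    by_cases hgγ : g = γ
    · right
      simp [hgγ, hγ, inv_mul_eq_one, hγδ.symm]
    · left
      simp [hg, inv_mul_eq_one, Ne.symm hgγ]

theorem exists_embedsInCommutator_closure_cube_eq_one (T : Type u) [Group T] [Countable T]
    (hT : IsMulTorsion T) :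
    ∃ (S : Type u) (_ : Group S), Countable S ∧ IsMulTorsion S ∧
      Subgroup.closure {s : S | s ^ 3 = 1} = ⊤ ∧ EmbedsInCommutator T S := by
  obtain ⟨G, _, _, hG, hTG⟩ := exists_embedsInCommutator T hT
  let Γ := Multiplicative (ZMod 3)
  let K : Subgroup (G ≀ᵣ Γ) := Subgroup.closure {w | w ^ 3 = 1}
  have hconj (γ : Γ) (x : G ≀ᵣ Γ) : x * inl γ * x⁻¹ ∈ K := by
    have hγ : γ ^ 3 = 1 := by revert γ; decide
    refine Subgroup.subset_closure ?_
    rw [Set.mem_ofPred_eq, conj_pow, ← map_pow, hγ, map_one, mul_one, mul_inv_cancel]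
  have : Countable (G ≀ᵣ Γ) := (equivProd G Γ).injective.countable
  have hcube : {k : K | k ^ 3 = 1} = Subtype.val ⁻¹' {w : G ≀ᵣ Γ | w ^ 3 = 1} := by
    ext k
    simp [Subtype.ext_iff]
  have hΓ : IsMulTorsion Γ := isMulTorsion_of_finite
  refine ⟨K, inferInstance, inferInstance, fun k => Submonoid.isOfFinOrder_coe.1 ?_, ?_,
    hTG.of_map_le baseSingle_injective <| map_baseSingle_commutator_le
      (γ := .ofAdd 1) (δ := .ofAdd 2) (by decide) (by decide) (by decide) (hconj _) (hconj _)⟩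
  · exact isOfFinOrder_of_right_of_left (hΓ _) fun m => .pi fun g => hG _
  · rw [hcube]
    exact Subgroup.closure_closure_coe_preimage

end CommutatorEmbedding

section Sidon

/-- The Sidon sets: those in which the right quotient of two distinct elements determines them. -/
def IsSidon {Γ : Type*} [Group Γ] (A : Set Γ) : Prop :=
  ∀ ⦃a⦄, a ∈ A → ∀ ⦃b⦄, b ∈ A → ∀ ⦃c⦄, c ∈ A → ∀ ⦃d⦄, d ∈ A →
    a ≠ b → a * b⁻¹ = c * d⁻¹ → a = c

variable {Γ : Type*} [Group Γ] {A B : Set Γ}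

lemma IsSidon.mono (hB : IsSidon B) (hAB : A ⊆ B) : IsSidon A :=
  fun _ ha _ hb _ hc _ hd => hB (hAB ha) (hAB hb) (hAB hc) (hAB hd)

lemma IsSidon.insert (hA : IsSidon A) {y : Γ} (hlin : ∀ a ∈ A, ∀ b ∈ A, ∀ c ∈ A, y ≠ a * b⁻¹ * c)
    (hquad : ∀ a ∈ A, ∀ b ∈ A, y * b⁻¹ * y ≠ a) : IsSidon (insert y A) := by
  rintro a ha b hb c hc d hd hab h
  have hcd : c ≠ d := fun hcd => hab (mul_inv_eq_one.1 (h.trans (mul_inv_eq_one.2 hcd)))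
  have hleft : a = c * d⁻¹ * b := mul_inv_eq_iff_eq_mul.1 h
  have hright : c = a * b⁻¹ * d := mul_inv_eq_iff_eq_mul.1 h.symm
  have hb' : b = d * c⁻¹ * a := by rw [hright]; group
  have hd' : d = b * a⁻¹ * c := by rw [hright]; group
  -- If `y` occurs among `a`, `b`, `c`, `d`, then one of these equations contradicts `hlin` or
  -- `hquad`, unless `a = c`.
  rcases ha with rfl | ha <;> rcases hb with rfl | hb <;> rcases hc with rfl | hc <;>
    rcases hd with rfl | hd <;> first | exact hA ha hb hc hd hab h | grind

lemma IsSidon.sUnion {c : Set (Set Γ)} (hc : ∀ A ∈ c, IsSidon A) (hdir : DirectedOn (· ⊆ ·) c) :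
    IsSidon (⋃₀ c) := by
  rintro x ⟨A₁, hA₁, hx⟩ y ⟨A₂, hA₂, hy⟩ z ⟨A₃, hA₃, hz⟩ w ⟨A₄, hA₄, hw⟩
  obtain ⟨B, hB, hB₁, hB₂⟩ := hdir _ hA₁ _ hA₂
  obtain ⟨C, hC, hC₃, hC₄⟩ := hdir _ hA₃ _ hA₄
  obtain ⟨D, hD, hBD, hCD⟩ := hdir _ hB _ hC
  exact hc D hD (hBD (hB₁ hx)) (hBD (hB₂ hy)) (hCD (hC₃ hz)) (hCD (hC₄ hw))

lemma exists_infinite_isSidon [Infinite Γ] (hsq : Function.Injective fun g : Γ => g ^ 2) :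
    ∃ A : Set Γ, A.Infinite ∧ IsSidon A := by
  obtain ⟨A, hA⟩ := zorn_subset {A : Set Γ | IsSidon A} fun c hc hchain =>
    ⟨⋃₀ c, .sUnion hc hchain.directedOn, fun _ => Set.subset_sUnion_of_mem⟩
  refine ⟨A, fun hfin => ?_, hA.prop⟩
  have hlin : (A * A⁻¹ * A).Finite := (hfin.mul hfin.inv).mul hfin
  have hquad : (⋃ b ∈ A, (fun y => y * b⁻¹ * y) ⁻¹' A).Finite := by
    refine hfin.biUnion fun b _ => hfin.preimage (Function.Injective.injOn fun y z hyz => ?_)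
    have : (y * b⁻¹) ^ 2 = (z * b⁻¹) ^ 2 := by
      simpa only [pow_two, ← mul_assoc] using congrArg (· * b⁻¹) hyz
    exact mul_right_cancel (hsq this)
  obtain ⟨y, hy⟩ := (hlin.union hquad).exists_notMem
  rw [Set.mem_union, not_or] at hy
  have hins : IsSidon (insert y A) := hA.prop.insert
    (fun a ha b hb c hc h =>
      hy.1 <| h ▸ Set.mul_mem_mul (Set.mul_mem_mul ha (Set.inv_mem_inv.2 hb)) hc)
    (fun a ha b hb h => hy.2 <| Set.mem_biUnion hb (Set.mem_preimage.2 (h.symm ▸ ha)))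
  have hyA : y ∈ A := hA.le_of_ge hins (Set.subset_insert y A) (Set.mem_insert y A)
  exact hy.1 ⟨y * y⁻¹, ⟨y, hyA, y⁻¹, Set.inv_mem_inv.2 hyA, rfl⟩, y, hyA, by simp⟩

lemma exists_mulSupport_subset_range_eq {X S : Type*} [One S] {A : Set X} (hA : A.Infinite)
    {C : Set S} (hC : C.Countable) (h1 : 1 ∈ C) :
    ∃ f : X → S, Function.mulSupport f ⊆ A ∧ Set.range f = C := by
  obtain ⟨e, rfl⟩ := hC.exists_eq_range ⟨1, h1⟩
  let φ : ℕ ↪ X := (hA.natEmbedding A).trans (Function.Embedding.subtype _)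
  refine ⟨Function.extend φ e 1, fun x hx => ?_, ?_⟩
  · by_contra hxA
    refine hx (Function.extend_apply' _ _ _ ?_)
    rintro ⟨n, rfl⟩
    exact hxA (hA.natEmbedding A n).2
  · rw [Set.range_extend φ.injective, Set.union_eq_left]
    rintro _ ⟨x, -, rfl⟩
    exact h1

end Sidon

section SidonWreath

variable {S : Type u} {Γ : Type v} [Group S] [Group Γ]

lemma IsSidon.finite_setOf_mul_mem {A : Set Γ} (hA : IsSidon A) {D : Set Γ} (hD : D.Finite) :
    {g | ∃ δ ∈ D, ∃ ε ∈ D, δ ≠ ε ∧ δ * g ∈ A ∧ ε * g ∈ A}.Finite := by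
  have hpair (δ ε : Γ) : {g | δ ≠ ε ∧ δ * g ∈ A ∧ ε * g ∈ A}.Subsingleton := by
    rintro g ⟨hδε, hδg, hεg⟩ h ⟨-, hδh, hεh⟩
    exact mul_left_cancel (hA hδg hεg hδh hεh (fun h => hδε (mul_right_cancel h)) (by group))
  refine (hD.biUnion fun δ _ => hD.biUnion fun ε _ => (hpair δ ε).finite).subset ?_
  rintro g ⟨δ, hδ, ε, hε, hg⟩
  exact Set.mem_biUnion hδ (Set.mem_biUnion hε hg)

/-- The functions `u` for which there are finitely many `δ` such that every value `u g` is a word in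
the values `f (δ * g)`. -/
def locallyGenerated (f : Γ → S) : Subgroup (Γ → S) where
  carrier := {u | ∃ D : Set Γ, D.Finite ∧
    ∀ g, u g ∈ Subgroup.closure ((fun δ => f (δ * g)) '' D)}
  one_mem' := ⟨∅, Set.finite_empty, fun _ => one_mem _⟩
  mul_mem' := by
    rintro u v ⟨D, hD, hu⟩ ⟨E, hE, hv⟩
    refine ⟨D ∪ E, hD.union hE, fun g => mul_mem ?_ ?_⟩
    · exact Subgroup.closure_mono (Set.image_mono Set.subset_union_left) (hu g)
    · exact Subgroup.closure_mono (Set.image_mono Set.subset_union_right) (hv g)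
  inv_mem' := fun ⟨D, hD, hu⟩ => ⟨D, hD, fun g => inv_mem (hu g)⟩

lemma self_mem_locallyGenerated (f : Γ → S) : f ∈ locallyGenerated f :=
  ⟨{1}, Set.finite_singleton 1, fun g => Subgroup.subset_closure ⟨1, rfl, by simp⟩⟩

lemma translate_mem_locallyGenerated (f : Γ → S) :
    ∀ u ∈ locallyGenerated f, ∀ γ : Γ, (fun g => u (γ * g)) ∈ locallyGenerated f := by
  rintro u ⟨D, hD, hu⟩ γ
  refine ⟨(· * γ) '' D, hD.image _, fun g => ?_⟩
  simpa only [Set.image_image, mul_assoc] using hu (γ * g)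

lemma pow_eq_one_of_mem_closure_image {X : Type*} {D : Set X} {w : X → S} {m : ℕ}
    (hw : ∀ x, w x ^ m = 1) (hD : {x ∈ D | w x ≠ 1}.Subsingleton) {s : S}
    (hs : s ∈ Subgroup.closure (w '' D)) : s ^ m = 1 := by
  obtain ⟨t, ht, k, rfl⟩ : ∃ t, t ^ m = 1 ∧ s ∈ Subgroup.zpowers t := by
    by_cases htriv : ∃ x ∈ D, w x ≠ 1
    · obtain ⟨x, hx, hwx⟩ := htriv
      refine ⟨w x, hw x, (Subgroup.closure_le _).2 ?_ hs⟩
      rintro _ ⟨y, hy, rfl⟩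
      by_cases hwy : w y = 1
      · simp only [hwy, SetLike.mem_coe, one_mem]
      · exact hD ⟨hx, hwx⟩ ⟨hy, hwy⟩ ▸ Subgroup.mem_zpowers _
    · push Not at htriv
      refine ⟨1, one_pow m, (Subgroup.closure_le _).2 ?_ hs⟩
      rintro _ ⟨x, hx, rfl⟩
      simp only [htriv x hx, SetLike.mem_coe, one_mem]
  change (t ^ k) ^ m = 1
  rw [← zpow_natCast, zpow_comm, zpow_natCast, ht, one_zpow]

/-- At all but finitely many points `g`, at most one of the values of `f` that generate `u g` is
nontrivial. -/
lemma isOfFinOrder_of_mem_locallyGenerated (hS : IsMulTorsion S) {f : Γ → S} (hf : IsOfFinOrder f)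
    (hsupp : IsSidon (Function.mulSupport f)) {u : Γ → S} (hu : u ∈ locallyGenerated f) :
    IsOfFinOrder u := by
  obtain ⟨m, hm, hfm⟩ := isOfFinOrder_iff_pow_eq_one.1 hf
  obtain ⟨D, hD, hu⟩ := hu
  have hfinite := hsupp.finite_setOf_mul_mem hD
  refine IsOfFinOrder.of_pow (n := m) (isOfFinOrder_of_finite_range hS ?_) hm.ne'
  refine ((hfinite.image (u ^ m)).insert 1).subset ?_
  rintro _ ⟨g, rfl⟩
  refine or_iff_not_imp_right.2 fun hg => ?_
  refine pow_eq_one_of_mem_closure_image (fun δ => congrFun hfm (δ * g)) ?_ (hu g)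
  rintro δ ⟨hδ, hfδ⟩ ε ⟨hε, hfε⟩
  by_contra hne
  exact hg ⟨g, ⟨δ, hδ, ε, hε, hne, hfδ, hfε⟩, rfl⟩

/-- The subgroup of the wreath product generated by the top group and the element `f` of the base
group. -/
def adjoinBase (f : Γ → S) : Subgroup (S ≀ᵣ Γ) :=
  Subgroup.closure (insert (baseHom f) (Set.range inl))

lemma baseHom_mem_adjoinBase (f : Γ → S) : baseHom f ∈ adjoinBase f :=
  Subgroup.subset_closure (Set.mem_insert _ _)

lemma inl_mem_adjoinBase (f : Γ → S) (γ : Γ) : inl γ ∈ adjoinBase f :=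
  Subgroup.subset_closure (.inr ⟨γ, rfl⟩)

lemma baseHom_translate_mem_adjoinBase {f u : Γ → S} (hu : baseHom u ∈ adjoinBase f) (γ : Γ) :
    baseHom (fun g => u (γ * g)) ∈ adjoinBase f := by
  have h := mul_mem (mul_mem (inl_mem_adjoinBase f γ⁻¹) hu) (inv_mem (inl_mem_adjoinBase f γ⁻¹))
  rwa [inl_mul_baseHom_mul_inv, inv_inv] at h

lemma isMulTorsion_adjoinBase (hΓ : IsMulTorsion Γ) (hS : IsMulTorsion S) {f : Γ → S}
    (hf : IsOfFinOrder f) (hsupp : IsSidon (Function.mulSupport f)) :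
    IsMulTorsion (adjoinBase f) := by
  have hle : adjoinBase f ≤
      wreathSubgroup (locallyGenerated f) (translate_mem_locallyGenerated f) := by
    refine (Subgroup.closure_le _).2 (Set.insert_subset (self_mem_locallyGenerated f) ?_)
    rintro _ ⟨γ, rfl⟩
    exact one_mem (locallyGenerated f)
  exact isMulTorsion_of_le_wreathSubgroup hΓ
    (fun _ => isOfFinOrder_of_mem_locallyGenerated hS hf hsupp) hle

lemma normal_comap_baseSingle_adjoinBase {f : Γ → S} (hgen : Subgroup.closure (Set.range f) = ⊤) :
    ((adjoinBase f).comap baseSingle).Normal := by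
  have hsurj : ((adjoinBase f).comap baseHom).map (Pi.evalMonoidHom (fun _ => S) 1) = ⊤ := by
    rw [eq_top_iff, ← hgen, Subgroup.closure_le]
    rintro _ ⟨γ, rfl⟩
    exact ⟨_, baseHom_translate_mem_adjoinBase (baseHom_mem_adjoinBase f) γ, by simp⟩
  refine ⟨fun s hs t => ?_⟩
  obtain ⟨u, hu, rfl⟩ := hsurj.ge (Subgroup.mem_top t)
  have hconj : baseHom u * baseSingle s * (baseHom u)⁻¹ ∈ adjoinBase f :=
    mul_mem (mul_mem hu hs) (inv_mem hu)
  classical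
  have h : baseHom u * baseSingle s * (baseHom u)⁻¹ = baseSingle (u 1 * s * (u 1)⁻¹) := by
    simp only [baseSingle_apply, ← map_inv, ← map_mul]
    congr 1
    ext g
    obtain rfl | hg := eq_or_ne g 1 <;> simp [*]
  rw [h] at hconj
  exact hconj

lemma map_baseSingle_commutator_le_adjoinBase {f : Γ → S} (hsupp : IsSidon (Function.mulSupport f))
    (hgen : Subgroup.closure (Set.range f) = ⊤) :
    (commutator S).map baseSingle ≤ adjoinBase f := by
  classical
  have := normal_comap_baseSingle_adjoinBase hgen
  rw [Subgroup.map_le_iff_le_comap]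
  refine commutator_le_of_closure_eq_top hgen ?_
  rintro _ ⟨a, rfl⟩ _ ⟨b, rfl⟩
  rw [Subgroup.mem_comap]
  by_cases htriv : ⁅f a, f b⁆ = 1
  · rw [htriv, map_one]
    exact one_mem _
  have hab : a ≠ b := fun hab => htriv (by rw [hab, commutatorElement_self])
  have ha : f a ≠ 1 := fun ha => htriv (by rw [ha, commutatorElement_one_left])
  have hb : f b ≠ 1 := fun hb => htriv (by rw [hb, commutatorElement_one_right])
  have hdisj (g : Γ) (hg : g ≠ 1) : f (a * g) = 1 ∨ f (b * g) = 1 := by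
    by_contra! h
    have := hsupp h.1 h.2 ha hb (fun h => hab (mul_right_cancel h)) (by group)
    exact hg (mul_eq_left.1 this)
  have hmem {γ : Γ} := baseHom_translate_mem_adjoinBase (baseHom_mem_adjoinBase f) γ
  have h := commutatorElement_eq_mulSingle (u := fun g => f (a * g)) (v := fun g => f (b * g)) hdisj
  simp only [mul_one] at h
  rw [baseSingle_apply, ← h, map_commutatorElement, commutatorElement_def]
  exact mul_mem (mul_mem (mul_mem hmem hmem) (inv_mem hmem)) (inv_mem hmem)

lemma exists_closure_range_eq_top_adjoinBase (f : Γ → S) {n : ℕ} {a : Fin n → Γ}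
    (ha : Subgroup.closure (Set.range a) = ⊤) :
    ∃ b : Fin (n + 1) → adjoinBase f, Subgroup.closure (Set.range b) = ⊤ := by
  refine exists_closure_range_eq_top (g := Fin.cons (baseHom f) (inl ∘ a)) ?_
  rw [adjoinBase, Fin.range_cons, Set.range_comp, Set.insert_eq, Set.insert_eq,
    Subgroup.closure_union, Subgroup.closure_union, ← MonoidHom.map_closure, ha,
    ← MonoidHom.range_eq_map, ← MonoidHom.coe_range, Subgroup.closure_eq]

theorem exists_torsion_generated_of_isSidon {T : Type*} [Group T] (hTS : EmbedsInCommutator T S)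
    (hS : IsMulTorsion S) (hΓ : IsMulTorsion Γ) {n : ℕ} {a : Fin n → Γ}
    (ha : Subgroup.closure (Set.range a) = ⊤) {f : Γ → S} (hf : IsOfFinOrder f)
    (hsupp : IsSidon (Function.mulSupport f)) (hgen : Subgroup.closure (Set.range f) = ⊤) :
    ∃ (Q : Type (max u v)) (_ : Group Q) (b : Fin (n + 1) → Q), IsMulTorsion Q ∧
      Subgroup.closure (Set.range b) = ⊤ ∧ ∃ ι : T →* Q, Function.Injective ι := by
  obtain ⟨i, hi, hrange⟩ := hTS
  obtain ⟨b, hb⟩ := exists_closure_range_eq_top_adjoinBase f ha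
  refine ⟨adjoinBase f, inferInstance, b, isMulTorsion_adjoinBase hΓ hS hf hsupp, hb,
    (baseSingle.comp i).codRestrict (adjoinBase f) fun t => ?_, fun s t h => ?_⟩
  · exact map_baseSingle_commutator_le_adjoinBase hsupp hgen ⟨_, hrange ⟨t, rfl⟩, rfl⟩
  · exact hi (baseSingle_injective (congrArg Subtype.val h))

end SidonWreath

/-- The permutations of the vertices of the `p`-regular rooted tree, which are encoded as the words
over `ZMod p`. -/
abbrev TreePerm (p : ℕ) : Type := Equiv.Perm (List (ZMod p))

namespace TreePerm

variable {p : ℕ}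

/-- The automorphism that fixes the first level of the tree and acts as `s x` on the subtree below
the vertex `x`. -/
def fiberwise : (ZMod p → TreePerm p) →* TreePerm p where
  toFun s :=
    { toFun := fun | [] => [] | x :: w => x :: s x w
      invFun := fun | [] => [] | x :: w => x :: (s x)⁻¹ w
      left_inv := by rintro (_ | ⟨x, w⟩) <;> simp
      right_inv := by rintro (_ | ⟨x, w⟩) <;> simp }
  map_one' := by ext1 (_ | ⟨x, w⟩) <;> rfl
  map_mul' _ _ := by ext1 (_ | ⟨x, w⟩) <;> rfl

@[simp]
lemma fiberwise_nil (s : ZMod p → TreePerm p) : fiberwise s [] = [] := rfl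

@[simp]
lemma fiberwise_cons (s : ZMod p → TreePerm p) (x : ZMod p) (w : List (ZMod p)) :
    fiberwise s (x :: w) = x :: s x w := rfl

lemma fiberwise_injective : Function.Injective (fiberwise (p := p)) := by
  intro s t h
  ext1 x
  ext1 w
  simpa using DFunLike.congr_fun h (x :: w)

lemma exists_fiberwise_pow_eq_one [NeZero p] {s : ZMod p → TreePerm p}
    (hs : ∀ x, ∃ a : ℕ, s x ^ p ^ a = 1) : ∃ a : ℕ, fiberwise s ^ p ^ a = 1 := by
  choose a ha using hs
  refine ⟨Finset.univ.sup a, ?_⟩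
  rw [← map_pow, ← map_one fiberwise]
  congr 1
  ext1 x
  exact orderOf_dvd_iff_pow_eq_one.1 <| (orderOf_dvd_of_pow_eq_one (ha x)).trans
    (pow_dvd_pow p (Finset.le_sup (Finset.mem_univ x)))

/-- The rooted automorphism permuting the subtrees of the first level cyclically, by `k` steps. -/
def rot (k : ZMod p) : TreePerm p where
  toFun | [] => [] | x :: w => (x + k) :: w
  invFun | [] => [] | x :: w => (x - k) :: w
  left_inv := by rintro (_ | ⟨x, w⟩) <;> simp
  right_inv := by rintro (_ | ⟨x, w⟩) <;> simp

@[simp]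
lemma rot_nil (k : ZMod p) : rot k [] = [] := rfl

@[simp]
lemma rot_cons (k x : ZMod p) (w : List (ZMod p)) : rot k (x :: w) = (x + k) :: w := rfl

@[simp]
lemma rot_zero : rot (0 : ZMod p) = 1 := by
  ext1 (_ | ⟨x, w⟩) <;> simp

lemma rot_add (k l : ZMod p) : rot (k + l) = rot k * rot l := by
  ext1 (_ | ⟨x, w⟩) <;> simp [add_assoc, add_comm l]

lemma rot_inv (k : ZMod p) : (rot k)⁻¹ = rot (-k) :=
  inv_eq_of_mul_eq_one_right (by rw [← rot_add, add_neg_cancel, rot_zero])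

lemma rot_mul_fiberwise (k : ZMod p) (s : ZMod p → TreePerm p) :
    rot k * fiberwise s = fiberwise (fun x => s (x - k)) * rot k := by
  ext1 (_ | ⟨x, w⟩) <;> simp

lemma fiberwise_mul_rot_pow (s : ZMod p → TreePerm p) (k : ZMod p) (m : ℕ) :
    (fiberwise s * rot k) ^ m =
      fiberwise (fun x => ((List.range m).map fun j : ℕ => s (x - (j : ZMod p) * k)).prod) *
        rot ((m : ZMod p) * k) := by
  induction m with
  | zero =>
    simp only [pow_zero, List.range_zero, List.map_nil, List.prod_nil, Nat.cast_zero, zero_mul,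
      rot_zero, mul_one]
    exact (map_one fiberwise).symm
  | succ m ih =>
    rw [pow_succ, ih, mul_assoc, ← mul_assoc (rot _), rot_mul_fiberwise, mul_assoc, ← rot_add,
      ← mul_assoc, ← map_mul, Nat.cast_succ, add_one_mul]
    congr 2
    ext1 x
    simp [List.range_succ]

/-- The underlying map of `dir`. -/
def dirFun (e : ZMod p) : List (ZMod p) → List (ZMod p)
  | [] => []
  | x :: w => x :: if x = 0 then dirFun e w else rot (e * x) w

lemma dirFun_add (e e' : ZMod p) (w : List (ZMod p)) :
    dirFun (e + e') w = dirFun e (dirFun e' w) := by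
  induction w with
  | nil => rfl
  | cons x w ih =>
    obtain rfl | hx := eq_or_ne x 0
    · simp [dirFun, ih]
    · simp [dirFun, hx, add_mul, rot_add]

lemma dirFun_zero (w : List (ZMod p)) : dirFun 0 w = w := by
  induction w with
  | nil => rfl
  | cons x w ih => simp [dirFun, ih]

/-- The directed automorphism with defining vector `(e, 2e, …, (p - 1)e)`: it acts as itself on the
subtree below the vertex `0`, and as `rot (e * x)` on the subtree below each other vertex `x`. -/
def dir (e : ZMod p) : TreePerm p where
  toFun := dirFun e
  invFun := dirFun (-e)
  left_inv w := by rw [← dirFun_add, neg_add_cancel, dirFun_zero]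
  right_inv w := by rw [← dirFun_add, add_neg_cancel, dirFun_zero]

lemma dir_add (e e' : ZMod p) : dir (e + e') = dir e * dir e' := Equiv.ext (dirFun_add e e')

/-- The action of `dir e` on the subtree below the vertex `x`. -/
def dirSection (e x : ZMod p) : TreePerm p := if x = 0 then dir e else rot (e * x)

lemma dirSection_add (e e' x : ZMod p) :
    dirSection (e + e') x = dirSection e x * dirSection e' x := by
  unfold dirSection
  split_ifs
  · exact dir_add e e'
  · rw [add_mul, rot_add]

/-- The conjugate of `dir e` by `rot i`, which acts as `dir e` on the subtree below the vertex
`i`. -/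
def spinal (i e : ZMod p) : TreePerm p := fiberwise fun x => dirSection e (x - i)

lemma spinal_zero_left (e : ZMod p) : spinal 0 e = dir e := by
  ext1 (_ | ⟨x, w⟩)
  · rfl
  · by_cases hx : x = 0 <;> simp [spinal, dirSection, dir, dirFun, hx]

lemma spinal_add (i e e' : ZMod p) : spinal i (e + e') = spinal i e * spinal i e' := by
  rw [spinal, spinal, spinal, ← map_mul]
  exact congrArg fiberwise (funext fun x => dirSection_add e e' (x - i))

@[simp]
lemma spinal_zero_right (i : ZMod p) : spinal i 0 = 1 := by
  simpa using spinal_add i 0 0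

lemma spinal_inv (i e : ZMod p) : (spinal i e)⁻¹ = spinal i (-e) :=
  inv_eq_of_mul_eq_one_right (by rw [← spinal_add, add_neg_cancel, spinal_zero_right])

lemma spinal_pow (i e : ZMod p) (m : ℕ) : spinal i e ^ m = spinal i (m * e) := by
  induction m with
  | zero => simp
  | succ m ih => rw [pow_succ, ih, ← spinal_add, Nat.cast_succ, add_one_mul]

lemma rot_mul_spinal (k i e : ZMod p) : rot k * spinal i e = spinal (i + k) e * rot k := by
  simp only [spinal, rot_mul_fiberwise, sub_sub, add_comm]

/-- `IsSpinalWord n k g` means that `g` is a product of `n` factors of the form `spinal i e`,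
followed by `rot k`. -/
inductive IsSpinalWord : ℕ → ZMod p → TreePerm p → Prop
  | base (k : ZMod p) : IsSpinalWord 0 k (rot k)
  | cons (i e : ZMod p) {n : ℕ} {k : ZMod p} {g : TreePerm p}
      (hg : IsSpinalWord n k g) : IsSpinalWord (n + 1) k (spinal i e * g)

namespace IsSpinalWord

variable {n m : ℕ} {k l : ZMod p} {g h : TreePerm p}

lemma one : IsSpinalWord 0 0 (1 : TreePerm p) := by
  simpa using IsSpinalWord.base (0 : ZMod p)

lemma of_spinal (i e : ZMod p) : IsSpinalWord 1 0 (spinal i e) := by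
  simpa using one.cons i e

lemma rot_mul (k : ZMod p) (hg : IsSpinalWord m l g) : IsSpinalWord m (k + l) (rot k * g) := by
  induction hg with
  | base l =>
    rw [← rot_add]
    exact .base _
  | cons i e _ ih =>
    rw [← mul_assoc, rot_mul_spinal, mul_assoc]
    exact ih.cons _ _

lemma mul (hg : IsSpinalWord n k g) (hh : IsSpinalWord m l h) :
    IsSpinalWord (n + m) (k + l) (g * h) := by
  induction hg with
  | base k =>
    rw [zero_add]
    exact hh.rot_mul k
  | cons i e _ ih =>
    rw [mul_assoc, Nat.add_right_comm]
    exact ih.cons i e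

lemma exists_inv (hg : IsSpinalWord n k g) : ∃ m l, IsSpinalWord m l g⁻¹ := by
  induction hg with
  | base k => exact ⟨0, -k, rot_inv k ▸ .base _⟩
  | cons i e _ ih =>
    obtain ⟨m, l, h⟩ := ih
    rw [mul_inv_rev, spinal_inv]
    exact ⟨_, _, h.mul (.of_spinal i (-e))⟩

lemma prod_range {c : ℕ → ℕ} {l : ℕ → ZMod p} {g : ℕ → TreePerm p}
    (hg : ∀ j, IsSpinalWord (c j) (l j) (g j)) (m : ℕ) :
    IsSpinalWord (∑ j ∈ Finset.range m, c j) (∑ j ∈ Finset.range m, l j)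
      ((List.range m).map g).prod := by
  induction m with
  | zero => simpa using one
  | succ m ih => simpa [List.range_succ, Finset.sum_range_succ] using ih.mul (hg m)

lemma of_dirSection (e x : ZMod p) :
    IsSpinalWord (if x = 0 then 1 else 0) (e * x) (dirSection e x) := by
  unfold dirSection
  split_ifs with hx
  · simpa [hx, spinal_zero_left] using of_spinal 0 e
  · exact .base _

end IsSpinalWord

variable (p) in
/-- The Grigorchuk–Gupta–Sidki group with defining vector `(1, 2, …, p - 1)`; for `p = 3` it is the
Gupta–Sidki group. -/
def GGS : Subgroup (TreePerm p) := Subgroup.closure {rot 1, dir 1}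

variable (p) in
lemma exists_generators_GGS : ∃ a : Fin 2 → GGS p, Subgroup.closure (Set.range a) = ⊤ :=
  exists_closure_range_eq_top (g := ![rot 1, dir 1]) (by simp [GGS, Set.pair_comm])

lemma exists_isSpinalWord_of_mem_GGS {g : TreePerm p} (hg : g ∈ GGS p) :
    ∃ n k, IsSpinalWord n k g := by
  induction hg using Subgroup.closure_induction with
  | mem g hg =>
    obtain rfl | rfl := hg
    · exact ⟨0, 1, .base 1⟩
    · exact ⟨1, 0, spinal_zero_left (1 : ZMod p) ▸ .of_spinal 0 1⟩
  | one => exact ⟨0, 0, .one⟩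
  | mul g h _ _ hg hh =>
    obtain ⟨n, k, hg⟩ := hg
    obtain ⟨m, l, hh⟩ := hh
    exact ⟨_, _, hg.mul hh⟩
  | inv g _ hg =>
    obtain ⟨n, k, hg⟩ := hg
    exact hg.exists_inv

section Nontrivial

variable [Nontrivial (ZMod p)]

lemma exists_fiberwise_mem_GGS {g : TreePerm p} (hg : g ∈ GGS p) :
    ∃ s : ZMod p → TreePerm p, fiberwise s ∈ GGS p ∧ s 0 = g := by
  suffices h : GGS p ≤ ((GGS p).comap fiberwise).map (Pi.evalMonoidHom _ 0) from h hg
  have hdir : dir 1 ∈ GGS p := Subgroup.subset_closure (by simp)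
  have hrot : rot 1 ∈ GGS p := Subgroup.subset_closure (by simp)
  refine (Subgroup.closure_le _).2 ?_
  rintro _ (rfl | rfl)
  · refine ⟨fun x => dirSection 1 (x + 1), ?_, by simp [dirSection]⟩
    have := mul_mem (mul_mem (inv_mem hrot) hdir) hrot
    rw [← spinal_zero_left, rot_inv, rot_mul_spinal, mul_assoc, ← rot_add] at this
    simpa [spinal] using this
  · refine ⟨fun x => dirSection 1 x, ?_, by simp [dirSection]⟩
    simpa [spinal, ← spinal_zero_left] using hdir

theorem infinite_GGS : Infinite (GGS p) := by
  choose s hs hs0 using fun g : GGS p => exists_fiberwise_mem_GGS g.2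
  let F : GGS p → GGS p := fun g => ⟨fiberwise (s g), hs g⟩
  have hF : Function.Injective F := by
    intro g h hgh
    have := congrFun (fiberwise_injective (Subtype.ext_iff.1 hgh)) 0
    rwa [hs0, hs0, Subtype.coe_inj] at this
  by_contra hfin
  rw [not_infinite_iff_finite] at hfin
  obtain ⟨g, hg⟩ := Finite.surjective_of_injective hF ⟨rot 1, Subgroup.subset_closure (by simp)⟩
  simpa [F] using DFunLike.congr_fun (Subtype.ext_iff.1 hg) [0]

end Nontrivial

variable [Fact p.Prime]

lemma sum_zmod_eq_zero (hp : p ≠ 2) : ∑ x : ZMod p, x = 0 := by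
  have hp' : 1 < Fintype.card (ZMod p) - 1 := by
    have := (Fact.out : p.Prime).two_le
    rw [ZMod.card]
    omega
  simpa using FiniteField.sum_pow_lt_card_sub_one (ZMod p) 1 hp'

lemma sum_range_sub_mul {M : Type*} [AddCommMonoid M] (F : ZMod p → M) (x : ZMod p) {k : ZMod p}
    (hk : k ≠ 0) : ∑ j ∈ Finset.range p, F (x - j * k) = ∑ y, F y := by
  refine Finset.sum_nbij' (fun j => x - j * k) (fun y => ((x - y) / k).val) ?_ ?_ ?_ ?_ ?_
  · simp
  · simp [ZMod.val_lt]
  · intro j hj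
    simp [hk, ZMod.val_cast_of_lt (Finset.mem_range.1 hj)]
  · simp [hk]
  · simp

open IsSpinalWord in
/-- Passing to the sections of a spinal word preserves the total number of spinal factors, and the
rotations of the sections cancel out because the entries of the defining vector sum to zero. -/
lemma IsSpinalWord.exists_eq_fiberwise_mul_rot (hp : p ≠ 2) {n : ℕ} {k : ZMod p}
    {g : TreePerm p} (hg : IsSpinalWord n k g) :
    ∃ (s : ZMod p → TreePerm p) (c : ZMod p → ℕ) (l : ZMod p → ZMod p),
      g = fiberwise s * rot k ∧ (∀ x, IsSpinalWord (c x) (l x) (s x)) ∧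
      ∑ x, c x = n ∧ ∑ x, l x = 0 ∧ ∀ i, c i = n → ∃ e, g = spinal i e * rot k := by
  induction hg with
  | base k => exact ⟨1, 0, 0, by simp, fun _ => .one, by simp, by simp, fun i _ => ⟨0, by simp⟩⟩
  | @cons i e n k g _ ih =>
    obtain ⟨s, c, l, rfl, hs, hc, hl, hn⟩ := ih
    refine ⟨fun x => dirSection e (x - i) * s x, fun x => (if x - i = 0 then 1 else 0) + c x,
      fun x => e * (x - i) + l x, ?_, fun x => (of_dirSection e _).mul (hs x), ?_, ?_, ?_⟩
    · rw [← mul_assoc, spinal, ← map_mul]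
      rfl
    · simp [Finset.sum_add_distrib, sub_eq_zero, hc, add_comm]
    · rw [Finset.sum_add_distrib, hl, add_zero, ← Finset.mul_sum,
        Finset.sum_sub_distrib, sum_zmod_eq_zero hp]
      simp
    · intro j hj
      have hle : c j ≤ n := hc ▸ Finset.single_le_sum (fun _ _ => Nat.zero_le _) (Finset.mem_univ j)
      obtain ⟨hji, hcj⟩ : j - i = 0 ∧ c j = n := by
        dsimp only at hj
        split_ifs at hj with h
        · exact ⟨h, by omega⟩
        · omega
      obtain rfl := sub_eq_zero.1 hji
      obtain ⟨e', h⟩ := hn j hcj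
      exact ⟨e + e', by rw [h, spinal_add, mul_assoc]⟩

theorem IsSpinalWord.exists_pow_eq_one (hp : p ≠ 2) {n : ℕ} {k : ZMod p}
    {g : TreePerm p} (hg : IsSpinalWord n k g) : ∃ a : ℕ, g ^ p ^ a = 1 := by
  induction n using Nat.strong_induction_on generalizing k g with
  | _ n ih =>
  have of_zero {h : TreePerm p} (hh : IsSpinalWord n 0 h) : ∃ a : ℕ, h ^ p ^ a = 1 := by
    obtain ⟨s, c, l, hhs, hs, hc, -, hn⟩ := hh.exists_eq_fiberwise_mul_rot hp
    by_cases hi : ∃ i, c i = n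
    · obtain ⟨i, hi⟩ := hi
      obtain ⟨e, rfl⟩ := hn i hi
      exact ⟨1, by simp [spinal_pow]⟩
    · have hlt (x : ZMod p) : c x < n := lt_of_le_of_ne
        (hc ▸ Finset.single_le_sum (fun _ _ => Nat.zero_le _) (Finset.mem_univ x))
        fun h => hi ⟨x, h⟩
      rw [hhs, rot_zero, mul_one]
      exact exists_fiberwise_pow_eq_one fun x => ih _ (hlt x) (hs x)
  obtain rfl | hk := eq_or_ne k 0
  · exact of_zero hg
  obtain ⟨s, c, l, rfl, hs, hc, hl, -⟩ := hg.exists_eq_fiberwise_mul_rot hp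
  have hsection (x : ZMod p) :
      IsSpinalWord n 0 ((List.range p).map fun j : ℕ => s (x - j * k)).prod := by
    have h := prod_range (fun j : ℕ => hs (x - j * k)) p
    rwa [sum_range_sub_mul _ _ hk, sum_range_sub_mul _ _ hk, hc, hl] at h
  obtain ⟨a, ha⟩ := exists_fiberwise_pow_eq_one fun x => of_zero (hsection x)
  refine ⟨a + 1, ?_⟩
  rw [pow_succ', pow_mul, fiberwise_mul_rot_pow, CharP.cast_eq_zero, zero_mul, rot_zero, mul_one,
    ha]

theorem isPGroup_GGS (hp : p ≠ 2) : IsPGroup p (GGS p) := by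
  rintro ⟨g, hg⟩
  obtain ⟨n, k, hg⟩ := exists_isSpinalWord_of_mem_GGS hg
  simpa [Subtype.ext_iff] using hg.exists_pow_eq_one hp

end TreePerm

theorem exists_torsion_three_generated (T : Type u) [Group T] [Countable T] (hT : IsMulTorsion T) :
    ∃ (Q : Type u) (_ : Group Q) (b : Fin 3 → Q), IsMulTorsion Q ∧
      Subgroup.closure (Set.range b) = ⊤ ∧ ∃ ι : T →* Q, Function.Injective ι := by
  obtain ⟨S, _, _, hS, hcube, hTS⟩ := exists_embedsInCommutator_closure_cube_eq_one T hT
  have h3 : IsPGroup 3 (TreePerm.GGS 3) := TreePerm.isPGroup_GGS (by decide)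
  have := TreePerm.infinite_GGS (p := 3)
  obtain ⟨A, hA, hSidon⟩ := exists_infinite_isSidon (h3.powEquiv (n := 2) (by decide)).injective
  obtain ⟨f, hsupp, hrange⟩ :=
    exists_mulSupport_subset_range_eq hA (C := {s : S | s ^ 3 = 1}) (Set.to_countable _) (one_pow 3)
  have hf (g : TreePerm.GGS 3) : f g ^ 3 = 1 := hrange.subset ⟨g, rfl⟩
  obtain ⟨a, ha⟩ := TreePerm.exists_generators_GGS 3
  exact exists_torsion_generated_of_isSidon hTS hS (h3.isOfFinOrder three_ne_zero) ha
    (isOfFinOrder_iff_pow_eq_one.2 ⟨3, three_pos, funext hf⟩) (hSidon.mono hsupp)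
    (hrange ▸ hcube)

/-- The set `{0, 1, 3}` is a perfect difference set modulo `7`. -/
lemma isSidon_zero_one_three :
    IsSidon ({.ofAdd 0, .ofAdd 1, .ofAdd 3} : Set (Multiplicative (ZMod 7))) := by
  rintro a (rfl | rfl | rfl) b (rfl | rfl | rfl) c (rfl | rfl | rfl) d (rfl | rfl | rfl) <;> decide

theorem exists_torsion_two_generated_of_three_generated {T : Type*} {S : Type u} [Group T] [Group S]
    (hTS : EmbedsInCommutator T S) (hS : IsMulTorsion S) {b : Fin 3 → S}
    (hb : Subgroup.closure (Set.range b) = ⊤) :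
    ∃ (Q : Type u) (_ : Group Q) (c : Fin 2 → Q), IsMulTorsion Q ∧
      Subgroup.closure (Set.range c) = ⊤ ∧ ∃ ι : T →* Q, Function.Injective ι := by
  let f : Multiplicative (ZMod 7) → S := fun z => ![b 0, b 1, 1, b 2, 1, 1, 1] z.toAdd
  have hsupp : Function.mulSupport f ⊆ {.ofAdd 0, .ofAdd 1, .ofAdd 3} := by
    intro z hz
    fin_cases z
    · exact .inl rfl
    · exact .inr (.inl rfl)
    · exact (hz rfl).elim
    · exact .inr (.inr rfl)
    all_goals exact (hz rfl).elim
  have hrange : Set.range b ⊆ Set.range f := by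
    rintro _ ⟨i, rfl⟩
    fin_cases i
    · exact ⟨.ofAdd 0, rfl⟩
    · exact ⟨.ofAdd 1, rfl⟩
    · exact ⟨.ofAdd 3, rfl⟩
  have hcyclic : Subgroup.closure (Set.range ![(.ofAdd 1 : Multiplicative (ZMod 7))]) = ⊤ := by
    have : Fact (Nat.Prime 7) := ⟨by norm_num⟩
    rw [Matrix.range_cons, Matrix.range_empty, Set.union_empty, ← Subgroup.zpowers_eq_closure]
    exact zpowers_eq_top_of_prime_card (p := 7) (by simp) (by decide)
  exact exists_torsion_generated_of_isSidon hTS hS isMulTorsion_of_finite hcyclic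
    (.pi fun z => hS _) (isSidon_zero_one_three.mono hsupp)
    (eq_top_iff.2 (hb ▸ Subgroup.closure_mono hrange))

/-- Every countable torsion group embeds into a torsion group generated by two elements. -/
theorem countable_torsion_group_embeds_in_two_generated_torsion_group
    (T : Type) [Group T] [Countable T] (hT : Monoid.IsTorsion T) :
    ∃ (Q : Type) (_ : Group Q) (q₁ q₂ : Q), Monoid.IsTorsion Q ∧
      Subgroup.closure {q₁, q₂} = ⊤ ∧ ∃ f : T →* Q, Function.Injective f := by
  obtain ⟨G, _, _, hG, hTG⟩ := exists_embedsInCommutator T hT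
  obtain ⟨S, _, b, hS, hb, ι, hι⟩ := exists_torsion_three_generated G hG
  obtain ⟨Q, _, c, hQ, hc, hTQ⟩ :=
    exists_torsion_two_generated_of_three_generated (hTG.of_injective hι) hS hb
  have hpair : Set.range c = {c 0, c 1} := by
    ext
    simp [Fin.exists_fin_two, eq_comm]
  exact ⟨Q, inferInstance, c 0, c 1, hQ, hpair ▸ hc, hTQ⟩
end
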